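/- arXiv:2003.07810 — 2 statements merged into one kernel-verified Lean document; each statement's English description precedes it below -/
import Mathlib

section
/- Let G = (V, E) be a graph on n vertices, let x ∈ [0,1]^E, let c ∈ ℝ_+^E, and let ε ∈ (0, 1/8). Suppose the graph formed by the edges e with x_e > 0 is connected (equivalently, the Laplacian L_x has rank n − 1), that for every edge e = uv ∈ E one has b_e b_eᵀ ⪯ ε²·L_x (i.e., the effective resistance Reff_x(u, v) ≤ ε²), and that c_∞ ≤ ε²·⟨c, x⟩. Then there exists z ∈ {0,1}^E such that (1 − 8ε)·L_x ⪯ L_z ⪯ (1 + 8ε)·L_x and (1 − 8ε)·⟨c, x⟩ ≤ ⟨c, z⟩ ≤ (1 + 8ε)·⟨c, x⟩. -/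
/-!
After a change of basis the Laplacian `L_x` is the identity, and the deviation of the rounding `z`
is `S = ∑ (zᵢ - xᵢ) wᵢ wᵢᵀ`. It satisfies `-α ⪯ S ⪯ α` as soon as `det (t - S) · det (t + S)` is
positive for all `t ≥ α`, and such a `z` is found by the method of interlacing families. The
determinant is affine in each coefficient `zᵢ`, so the product is quadratic in it, and averaging
over a Bernoulli variable `zᵢ` of mean `xᵢ` amounts to applying `1 - (vᵢ / 2) ∂ᵢ²` with
`vᵢ = xᵢ (1 - xᵢ)`. This operator preserves stability.

* The expected product is positive on `[α, ∞)` by a multivariate barrier argument: each operator is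
  paid for by a shift of its variable proportional to `vᵢ`, and the Rayleigh inequalities
  `F ∂ᵢ∂ⱼF ≤ ∂ᵢF ∂ⱼF`, a consequence of stability, keep the logarithmic derivatives from growing.
* The coordinates are then fixed one at a time. Every convex combination of the two conditional
  expectations is an expectation for another mean, hence real-rooted in `t`, and a real-rooted
  polynomial has no positive local minimum. Along the segment between the two expectations,
  positivity on a half-line therefore cannot be lost at both ends.

The cost is controlled as one more coordinate: the same rounding is applied to the vectors
`(b_e, √c_e)`.
-/

open Matrix BigOperators

namespace SpectralRounding

section DifferenceOperators

variable {ι R S : Type*} [CommRing R] [CommRing S]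

/-- The symmetric product `z ↦ F (z - ξ) F (z + ξ)`. -/
def pairing (F : (ι → R) → R) (ξ z : ι → R) : R :=
  F (z - ξ) * F (z + ξ)

section Intertwining

variable [Algebra ℝ R] [Algebra ℝ S]

/-- `F` and `G` are the same function over `R` and over `S`, as for two evaluations of one
polynomial with real coefficients. -/
def Intertwines (f : R →ₐ[ℝ] S) (F : (ι → R) → R) (G : (ι → S) → S) : Prop :=
  ∀ z, f (F z) = G (f ∘ z)

theorem Intertwines.pairing {f : R →ₐ[ℝ] S} {F : (ι → R) → R} {G : (ι → S) → S}
    (h : Intertwines f F G) (ξ : ι → R) :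
    Intertwines f (pairing F ξ) (pairing G (f ∘ ξ)) := fun z => by
  have hsub : f ∘ (z - ξ) = f ∘ z - f ∘ ξ := funext fun _ => map_sub f _ _
  have hadd : f ∘ (z + ξ) = f ∘ z + f ∘ ξ := funext fun _ => map_add f _ _
  rw [SpectralRounding.pairing, SpectralRounding.pairing, map_mul, h, h, hsub, hadd]

end Intertwining

variable [DecidableEq ι]

/-- The operator `F ↦ F (· + s eᵢ)` on functions of `ι`-many variables. -/
def shift (i : ι) (s : R) : Module.End R ((ι → R) → R) :=
  LinearMap.funLeft R R (· + Pi.single i s)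

theorem shift_apply (i : ι) (s : R) (F : (ι → R) → R) (z : ι → R) :
    shift i s F z = F (z + Pi.single i s) :=
  rfl

theorem shift_commute (i j : ι) (s t : R) : Commute (shift i s) (shift j t) := by
  ext F z
  exact congrArg F (add_right_comm z _ _)

variable [Algebra ℝ R] [Algebra ℝ S]

/-- The central difference in the `i`-th variable; it is the coefficient of `s` in `F (z + s eᵢ)`,
that is `∂ᵢ F z`, when `F` is quadratic in this variable. -/
noncomputable def linCoeff (i : ι) : Module.End R ((ι → R) → R) :=
  (2⁻¹ : ℝ) • (shift i 1 - shift i (-1))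

/-- Half the second central difference in the `i`-th variable; it is the coefficient of `s ^ 2` in
`F (z + s eᵢ)`, that is `∂ᵢ² F z / 2`, when `F` is quadratic in this variable. -/
noncomputable def quadCoeff (i : ι) : Module.End R ((ι → R) → R) :=
  (2⁻¹ : ℝ) • (shift i 1 + shift i (-1)) - 1

/-- The operator `1 - (v / 2) ∂ᵢ²` on functions quadratic in the `i`-th variable. -/
noncomputable def varianceOp (v : ℝ) (i : ι) : Module.End R ((ι → R) → R) :=
  1 - v • quadCoeff i

/-- The product of the operators `1 - (vᵢ / 2) ∂ᵢ²` over the indices in a list. -/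
noncomputable def varianceProd (v : ι → ℝ) (l : List ι) : Module.End R ((ι → R) → R) :=
  (l.map fun i => varianceOp (v i) i).prod

variable (ι R) in
/-- The commutative algebra of operators generated by the shifts. -/
noncomputable def differenceOperators : Subalgebra ℝ (Module.End R ((ι → R) → R)) :=
  Algebra.adjoin ℝ (Set.range fun p : ι × R => shift p.1 p.2)

theorem linCoeff_apply (i : ι) (F : (ι → R) → R) (z : ι → R) :
    linCoeff i F z = (2⁻¹ : ℝ) • (F (z + Pi.single i 1) - F (z + Pi.single i (-1))) :=
  rfl

theorem quadCoeff_apply (i : ι) (F : (ι → R) → R) (z : ι → R) :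
    quadCoeff i F z = (2⁻¹ : ℝ) • (F (z + Pi.single i 1) + F (z + Pi.single i (-1))) - F z :=
  rfl

theorem varianceOp_apply (v : ℝ) (i : ι) (F : (ι → R) → R) (z : ι → R) :
    varianceOp v i F z = F z - v • quadCoeff i F z :=
  rfl

theorem varianceProd_cons_apply (v : ι → ℝ) (i : ι) (l : List ι) (F : (ι → R) → R) :
    varianceProd v (i :: l) F = varianceOp (v i) i (varianceProd v l F) := by
  rw [varianceProd, List.map_cons, List.prod_cons, Module.End.mul_apply]; rfl

theorem shift_mem (i : ι) (s : R) : shift i s ∈ differenceOperators ι R :=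
  Algebra.subset_adjoin ⟨(i, s), rfl⟩

theorem linCoeff_mem (i : ι) : linCoeff i ∈ differenceOperators ι R :=
  Subalgebra.smul_mem _ (sub_mem (shift_mem i 1) (shift_mem i (-1))) _

theorem quadCoeff_mem (i : ι) : quadCoeff i ∈ differenceOperators ι R :=
  sub_mem (Subalgebra.smul_mem _ (add_mem (shift_mem i 1) (shift_mem i (-1))) _) (one_mem _)

theorem varianceOp_mem (v : ℝ) (i : ι) : varianceOp v i ∈ differenceOperators ι R :=
  sub_mem (one_mem _) (Subalgebra.smul_mem _ (quadCoeff_mem i) _)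

theorem varianceProd_mem (v : ι → ℝ) (l : List ι) :
    varianceProd v l ∈ differenceOperators ι R :=
  list_prod_mem fun A hA => by
    obtain ⟨i, -, rfl⟩ := List.mem_map.1 hA
    exact varianceOp_mem (v i) i

theorem commute_of_mem_differenceOperators {A B : Module.End R ((ι → R) → R)}
    (hA : A ∈ differenceOperators ι R) (hB : B ∈ differenceOperators ι R) : Commute A B := by
  refine Algebra.commute_of_mem_adjoin_of_forall_mem_commute hB ?_
  rintro _ ⟨⟨j, t⟩, rfl⟩
  refine (Algebra.commute_of_mem_adjoin_of_forall_mem_commute hA ?_).symm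
  rintro _ ⟨⟨i, s⟩, rfl⟩
  exact shift_commute j i t s

theorem apply_comm_of_mem_differenceOperators {A B : Module.End R ((ι → R) → R)}
    (hA : A ∈ differenceOperators ι R) (hB : B ∈ differenceOperators ι R)
    (F : (ι → R) → R) : A (B F) = B (A F) :=
  LinearMap.congr_fun (commute_of_mem_differenceOperators hA hB) F

/-- `F` is a polynomial of degree at most one in each variable separately. -/
def SeparatelyAffine (F : (ι → R) → R) : Prop :=
  ∀ i s, shift i s F = F + s • linCoeff i F

/-- `F` is a polynomial of degree at most two in each variable separately. -/
def SeparatelyQuadratic (F : (ι → R) → R) : Prop :=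
  ∀ i s, shift i s F = F + s • linCoeff i F + s ^ 2 • quadCoeff i F

theorem SeparatelyAffine.apply_add_single {F : (ι → R) → R} (hF : SeparatelyAffine F) (i : ι)
    (s : R) (z : ι → R) : F (z + Pi.single i s) = F z + s * linCoeff i F z :=
  congrFun (hF i s) z

theorem SeparatelyQuadratic.apply_add_single {F : (ι → R) → R} (hF : SeparatelyQuadratic F)
    (i : ι) (s : R) (z : ι → R) :
    F (z + Pi.single i s) = F z + s * linCoeff i F z + s ^ 2 * quadCoeff i F z :=
  congrFun (hF i s) z

theorem SeparatelyAffine.of_slope {F : (ι → R) → R} (D : ι → (ι → R) → R)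
    (h : ∀ i s z, F (z + Pi.single i s) = F z + s * D i z) : SeparatelyAffine F := by
  intro i s
  have hD : linCoeff i F = D i := by
    ext z
    rw [linCoeff_apply, h, h, show F z + 1 * D i z - (F z + -1 * D i z) = (2 : ℝ) • D i z by
      rw [two_smul]; ring, smul_smul, inv_mul_cancel₀ two_ne_zero, one_smul]
  ext z
  rw [hD, shift_apply, h]
  rfl

theorem SeparatelyQuadratic.map {F : (ι → R) → R} (hF : SeparatelyQuadratic F)
    {A : Module.End R ((ι → R) → R)} (hA : A ∈ differenceOperators ι R) :
    SeparatelyQuadratic (A F) := by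
  intro i s
  rw [← apply_comm_of_mem_differenceOperators hA (shift_mem i s), hF i s, map_add, map_add,
    map_smul, map_smul, apply_comm_of_mem_differenceOperators hA (linCoeff_mem i),
    apply_comm_of_mem_differenceOperators hA (quadCoeff_mem i)]

theorem SeparatelyAffine.pairing_apply_add_single {F : (ι → R) → R} (hF : SeparatelyAffine F)
    (ξ : ι → R) (i : ι) (s : R) (z : ι → R) :
    pairing F ξ (z + Pi.single i s) = pairing F ξ z
      + s * (linCoeff i F (z - ξ) * F (z + ξ) + F (z - ξ) * linCoeff i F (z + ξ))
      + s ^ 2 * (linCoeff i F (z - ξ) * linCoeff i F (z + ξ)) := by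
  rw [pairing, add_sub_right_comm, add_right_comm, hF.apply_add_single, hF.apply_add_single,
    pairing]
  ring

theorem SeparatelyAffine.linCoeff_pairing {F : (ι → R) → R} (hF : SeparatelyAffine F)
    (ξ : ι → R) (i : ι) (z : ι → R) :
    linCoeff i (pairing F ξ) z
      = linCoeff i F (z - ξ) * F (z + ξ) + F (z - ξ) * linCoeff i F (z + ξ) := by
  rw [linCoeff_apply, inv_smul_eq_iff₀ two_ne_zero, two_smul, hF.pairing_apply_add_single,
    hF.pairing_apply_add_single]
  ring

theorem SeparatelyAffine.quadCoeff_pairing {F : (ι → R) → R} (hF : SeparatelyAffine F)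
    (ξ : ι → R) (i : ι) (z : ι → R) :
    quadCoeff i (pairing F ξ) z = linCoeff i F (z - ξ) * linCoeff i F (z + ξ) := by
  rw [quadCoeff_apply, sub_eq_iff_eq_add, inv_smul_eq_iff₀ two_ne_zero, two_smul,
    hF.pairing_apply_add_single, hF.pairing_apply_add_single]
  ring

theorem SeparatelyAffine.separatelyQuadratic_pairing {F : (ι → R) → R} (hF : SeparatelyAffine F)
    (ξ : ι → R) : SeparatelyQuadratic (pairing F ξ) := by
  intro i s
  ext z
  rw [Pi.add_apply, Pi.add_apply, Pi.smul_apply, Pi.smul_apply, hF.linCoeff_pairing,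
    hF.quadCoeff_pairing, shift_apply, hF.pairing_apply_add_single, smul_eq_mul, smul_eq_mul]

theorem SeparatelyAffine.linCoeff_add_single {F : (ι → R) → R} (hF : SeparatelyAffine F)
    (i : ι) (s : R) (z : ι → R) : linCoeff i F (z + Pi.single i s) = linCoeff i F z := by
  rw [linCoeff_apply, linCoeff_apply, add_assoc, add_assoc, ← Pi.single_add, ← Pi.single_add]
  simp only [hF.apply_add_single]
  congr 1
  ring

/- Replacing `ξᵢ + s` by `ξᵢ` plus a Bernoulli variable of mean `s` costs one variance operator. -/
theorem SeparatelyAffine.average_pairing {F : (ι → R) → R} (hF : SeparatelyAffine F)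
    (ξ : ι → R) (i : ι) (s : ℝ) :
    s • pairing F (ξ + Pi.single i 1) + (1 - s) • pairing F ξ
      = varianceOp (s * (1 - s)) i (pairing F (ξ + Pi.single i (algebraMap ℝ R s))) := by
  ext z
  rw [varianceOp_apply, hF.quadCoeff_pairing, Pi.add_apply, Pi.smul_apply, Pi.smul_apply]
  simp only [pairing, sub_add_eq_sub_sub, ← add_assoc, sub_eq_add_neg _ (Pi.single i _),
    ← Pi.single_neg, hF.apply_add_single, hF.linCoeff_add_single, Algebra.smul_def, map_mul,
    map_sub, map_one]
  ring

namespace Intertwines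

variable {f : R →ₐ[ℝ] S} {F : (ι → R) → R} {G : (ι → S) → S}

theorem apply_add_single (h : Intertwines f F G) (i : ι) (s : R) (z : ι → R) :
    f (F (z + Pi.single i s)) = G (f ∘ z + Pi.single i (f s)) := by
  rw [h]
  refine congrArg G (funext fun j => ?_)
  rw [Function.comp_apply, Pi.add_apply, Pi.add_apply, map_add,
    Pi.apply_single (fun _ => f) (fun _ => map_zero f)]
  rfl

theorem linCoeff (h : Intertwines f F G) (i : ι) :
    Intertwines f (linCoeff i F) (linCoeff i G) := fun z => by
  rw [linCoeff_apply, linCoeff_apply, map_smul, map_sub, h.apply_add_single, h.apply_add_single,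
    map_neg, map_one]

theorem quadCoeff (h : Intertwines f F G) (i : ι) :
    Intertwines f (quadCoeff i F) (quadCoeff i G) := fun z => by
  rw [quadCoeff_apply, quadCoeff_apply, map_sub, map_smul, map_add, h.apply_add_single,
    h.apply_add_single, map_neg, map_one, h]

theorem varianceOp (h : Intertwines f F G) (v : ℝ) (i : ι) :
    Intertwines f (varianceOp v i F) (varianceOp v i G) := fun z => by
  rw [varianceOp_apply, varianceOp_apply, map_sub, map_smul, h, h.quadCoeff]

theorem varianceProd (h : Intertwines f F G) (v : ι → ℝ) (l : List ι) :
    Intertwines f (varianceProd v l F) (varianceProd v l G) := by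
  induction l with
  | nil => exact h
  | cons i l ih =>
    rw [varianceProd_cons_apply, varianceProd_cons_apply]
    exact ih.varianceOp (v i) i

end Intertwines

end DifferenceOperators

section Stability

theorem exists_roots_im_neg {a b c : ℂ} (h : ∀ s : ℂ, 0 ≤ s.im → a + s * b + s ^ 2 * c ≠ 0)
    (hc : c ≠ 0) : ∃ r q : ℂ, r.im < 0 ∧ q.im < 0 ∧ b = -(c * (r + q)) ∧ a = c * (q * r) := by
  obtain ⟨d, hd⟩ := IsAlgClosed.exists_pow_nat_eq (b ^ 2 - 4 * c * a) (n := 2) two_pos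
  have him (s : ℂ) (hs : a + s * b + s ^ 2 * c = 0) : s.im < 0 := lt_of_not_ge fun h' => h s h' hs
  refine ⟨(-b + d) / (2 * c), (-b - d) / (2 * c), him _ ?_, him _ ?_, ?_, ?_⟩
  · field_simp
    linear_combination hd
  · field_simp
    linear_combination hd
  · field_simp
    ring
  · field_simp
    linear_combination hd

/- The two roots lie in the open lower half-plane, so their product is not a nonnegative real. -/
theorem sub_ofReal_mul_ne_zero {a b c : ℂ}
    (h : ∀ s : ℂ, 0 ≤ s.im → a + s * b + s ^ 2 * c ≠ 0) {v : ℝ} (hv : 0 ≤ v) : a - v * c ≠ 0 := by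
  intro h0
  rcases eq_or_ne c 0 with rfl | hc
  · exact h 0 le_rfl (by linear_combination h0)
  obtain ⟨r, q, hr, hq, -, rfl⟩ := exists_roots_im_neg h hc
  have hqr : q * r = v := mul_left_cancel₀ hc (by linear_combination h0)
  have him : Complex.normSq r * q.im = v * -r.im := by
    rw [← Complex.im_ofReal_mul, ← Complex.conj_im, ← Complex.im_ofReal_mul, ← Complex.mul_conj]
    exact congrArg Complex.im (by linear_combination starRingEnd ℂ r * hqr)
  have hr0 : 0 < Complex.normSq r := Complex.normSq_pos.2 (by rintro rfl; exact hr.false)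
  linarith [mul_neg_of_pos_of_neg hr0 hq, mul_nonneg hv (neg_nonneg.2 hr.le)]

/- `b / a` is the sum of `-1 / r` over the roots `r`. -/
theorem im_mul_conj_nonpos {a b c : ℂ}
    (h : ∀ s : ℂ, 0 ≤ s.im → a + s * b + s ^ 2 * c ≠ 0) : (b * starRingEnd ℂ a).im ≤ 0 := by
  rcases eq_or_ne c 0 with rfl | hc
  · by_contra! hpos
    have hb : b ≠ 0 := by
      rintro rfl
      simp only [zero_mul, Complex.zero_im, lt_self_iff_false] at hpos
    refine h (-a / b) ?_ (by field_simp; ring)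
    have him : (-a / b).im = (b * starRingEnd ℂ a).im / Complex.normSq b := by
      simp only [Complex.div_im, Complex.neg_im, Complex.neg_re, Complex.mul_im, Complex.conj_im,
        Complex.conj_re]
      ring
    rw [him]
    exact div_nonneg hpos.le (Complex.normSq_nonneg b)
  · obtain ⟨r, q, hr, hq, rfl, rfl⟩ := exists_roots_im_neg h hc
    have hfactor : -(c * (r + q)) * starRingEnd ℂ (c * (q * r))
        = (-Complex.normSq c : ℝ) * ((Complex.normSq r : ℝ) * starRingEnd ℂ q
          + (Complex.normSq q : ℝ) * starRingEnd ℂ r) := by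
      simp only [map_mul, Complex.ofReal_neg, ← Complex.mul_conj]
      ring
    rw [hfactor, Complex.im_ofReal_mul, Complex.add_im, Complex.im_ofReal_mul,
      Complex.im_ofReal_mul, Complex.conj_im, Complex.conj_im]
    refine mul_nonpos_of_nonpos_of_nonneg (neg_nonpos.2 (Complex.normSq_nonneg c))
      (add_nonneg ?_ ?_)
    · exact mul_nonneg (Complex.normSq_nonneg r) (neg_nonneg.2 hq.le)
    · exact mul_nonneg (Complex.normSq_nonneg q) (neg_nonneg.2 hr.le)

/-- `F` has no zero with all coordinates in the closed upper half-plane. -/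
def StronglyStable {ι : Type*} (F : (ι → ℂ) → ℂ) : Prop :=
  ∀ z, (∀ i, 0 ≤ (z i).im) → F z ≠ 0

theorem StronglyStable.pairing {ι : Type*} {F : (ι → ℂ) → ℂ} (hF : StronglyStable F) {ξ : ι → ℂ}
    (hξ : ∀ i, (ξ i).im = 0) : StronglyStable (pairing F ξ) := by
  refine fun z hz => mul_ne_zero (hF _ fun i => ?_) (hF _ fun i => ?_)
  · rw [Pi.sub_apply, Complex.sub_im, hξ, sub_zero]
    exact hz i
  · rw [Pi.add_apply, Complex.add_im, hξ, add_zero]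
    exact hz i

variable {ι : Type*} [DecidableEq ι] {F : (ι → ℂ) → ℂ}

theorem StronglyStable.quadratic_ne_zero (hF : StronglyStable F) (hq : SeparatelyQuadratic F)
    {z : ι → ℂ} (hz : ∀ i, 0 ≤ (z i).im) (i : ι) (s : ℂ) (hs : 0 ≤ s.im) :
    F z + s * linCoeff i F z + s ^ 2 * quadCoeff i F z ≠ 0 := by
  rw [← hq.apply_add_single]
  refine hF _ fun j => ?_
  rw [Pi.add_apply, Complex.add_im]
  rcases eq_or_ne j i with rfl | hj
  · rw [Pi.single_eq_same]
    exact add_nonneg (hz j) hs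
  · rw [Pi.single_eq_of_ne hj, Complex.zero_im, add_zero]
    exact hz j

theorem StronglyStable.varianceOp (hF : StronglyStable F) (hq : SeparatelyQuadratic F) {v : ℝ}
    (hv : 0 ≤ v) (i : ι) : StronglyStable (varianceOp v i F) := fun z hz => by
  rw [varianceOp_apply, Complex.real_smul]
  exact sub_ofReal_mul_ne_zero (hF.quadratic_ne_zero hq hz i) hv

theorem StronglyStable.varianceProd (hF : StronglyStable F) (hq : SeparatelyQuadratic F)
    {v : ι → ℝ} (hv : ∀ i, 0 ≤ v i) (l : List ι) : StronglyStable (varianceProd v l F) := by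
  induction l with
  | nil => exact hF
  | cons i l ih =>
    rw [varianceProd_cons_apply]
    exact ih.varianceOp (hq.map (varianceProd_mem v l)) (hv i) i

theorem StronglyStable.im_linCoeff_mul_conj_nonpos (hF : StronglyStable F)
    (hq : SeparatelyQuadratic F) {z : ι → ℂ} (hz : ∀ i, 0 ≤ (z i).im) (i : ι) :
    (linCoeff i F z * starRingEnd ℂ (F z)).im ≤ 0 :=
  im_mul_conj_nonpos (hF.quadratic_ne_zero hq hz i)

/-- The inequality `F ∂ᵢ∂ⱼF ≤ ∂ᵢF ∂ⱼF` everywhere (negative correlation, for a generating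
polynomial). -/
def Rayleigh (F : (ι → ℝ) → ℝ) : Prop :=
  ∀ z i j, F z * linCoeff j (linCoeff i F) z ≤ linCoeff i F z * linCoeff j F z

/- At `z + iηeⱼ` with `z` real, the sign of `Im (∂ᵢF / F)` is the asserted inequality up to a term
of order `η²`. -/
theorem rayleigh_of_im_linCoeff_mul_conj_nonpos (hq : SeparatelyQuadratic F)
    (him : ∀ z, (∀ i, 0 ≤ (z i).im) → ∀ i, (linCoeff i F z * starRingEnd ℂ (F z)).im ≤ 0)
    {G : (ι → ℝ) → ℝ} (h : Intertwines (Algebra.ofId ℝ ℂ) G F) : Rayleigh G := by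
  intro z i j
  have key (η : ℝ) (hη : 0 < η) :
      G z * linCoeff j (linCoeff i G) z - linCoeff i G z * linCoeff j G z
        ≤ η ^ 2 * (quadCoeff j G z * linCoeff j (linCoeff i G) z
          - quadCoeff j (linCoeff i G) z * linCoeff j G z) := by
    have hz (k : ι) : 0 ≤ ((Algebra.ofId ℝ ℂ ∘ z + Pi.single j (η * Complex.I) : ι → ℂ) k).im := by
      rw [Pi.add_apply, Complex.add_im, Function.comp_apply]
      rcases eq_or_ne k j with rfl | hk
      · simp [hη.le]
      · simp [hk]
    have := him _ hz i
    rw [hq.apply_add_single, (hq.map (linCoeff_mem i)).apply_add_single, ← h, ← h.linCoeff,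
      ← h.linCoeff, ← (h.linCoeff i).linCoeff, ← h.quadCoeff, ← (h.linCoeff i).quadCoeff] at this
    simp only [Algebra.ofId_apply, Complex.coe_algebraMap, pow_two, map_add, map_mul,
      Complex.conj_ofReal, Complex.conj_I, mul_neg, neg_mul, neg_neg, Complex.add_re,
      Complex.add_im, Complex.mul_re, Complex.mul_im, Complex.neg_re, Complex.neg_im,
      Complex.ofReal_re, Complex.ofReal_im, Complex.I_re, Complex.I_im, mul_zero, mul_one, zero_mul,
      sub_self, sub_zero, zero_sub, add_zero, zero_add, neg_zero] at this
    refine le_of_mul_le_mul_left ?_ hη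
    linarith
  have hlim : Filter.Tendsto (fun η : ℝ => η ^ 2 * (quadCoeff j G z * linCoeff j (linCoeff i G) z
      - quadCoeff j (linCoeff i G) z * linCoeff j G z)) (nhdsWithin 0 (Set.Ioi 0)) (nhds 0) := by
    refine tendsto_nhdsWithin_of_tendsto_nhds ?_
    exact (by fun_prop : Continuous _).tendsto' _ _ (by simp)
  exact sub_nonpos.1 (ge_of_tendsto hlim (eventually_mem_nhdsWithin.mono key))

end Stability

section Barrier

theorem nonneg_coeffs_of_pos_of_real_roots {a b c : ℝ}
    (hf : ∀ s, 0 ≤ s → 0 < a + s * b + s ^ 2 * c) (hdisc : 4 * a * c ≤ b ^ 2) : 0 ≤ b ∧ 0 ≤ c := by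
  have ha : 0 < a := by simpa using hf 0 le_rfl
  by_contra! hneg
  have hroot : 0 < √(b ^ 2 - 4 * a * c) - b := by
    rcases lt_or_ge b 0 with hb | hb
    · linarith [Real.sqrt_nonneg (b ^ 2 - 4 * a * c)]
    · refine sub_pos.2 (Real.lt_sqrt_of_sq_lt ?_)
      linarith [mul_neg_of_pos_of_neg ha (hneg hb)]
  have hsq := Real.sq_sqrt (sub_nonneg.2 hdisc)
  set d := √(b ^ 2 - 4 * a * c)
  refine (hf (2 * a / (d - b)) (by positivity)).ne' ?_
  field_simp
  linear_combination a * hsq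

/- The Wronskian of the two quadratics is itself a nonnegative quadratic, with constant coefficient
`W = b a' - a b'` and linear coefficient `2 H`, where `H = c a' - a c'`. -/
theorem wronskian_bounds {a b c a' b' c' : ℝ} (ha : 0 < a) (hb : 0 ≤ b) (hc : 0 ≤ c)
    (hW : ∀ s : ℝ, (a + s * b + s ^ 2 * c) * (b' + 2 * s * c')
      ≤ (a' + s * b' + s ^ 2 * c') * (b + 2 * s * c)) :
    0 ≤ c * a' - a * c' ∧ a * (c * a' - a * c') ≤ b * (b * a' - a * b') := by
  set W := b * a' - a * b' with hW_def
  set H := c * a' - a * c' with hH_def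
  have hW0 : 0 ≤ W := by linarith [hW 0]
  have hdisc : (2 * H) ^ 2 - 4 * (c * b' - b * c') * W ≤ 0 :=
    discrim_le_zero fun s => by linarith [hW s]
  have hquad : a * H ^ 2 - b * H * W + c * W ^ 2 ≤ 0 := by
    have hrel : a * (c * b' - b * c') = b * H - c * W := by rw [hW_def, hH_def]; ring
    have := mul_nonpos_of_nonneg_of_nonpos ha.le hdisc
    linear_combination (1 / 4) * this + W * hrel
  have hcW : 0 ≤ c * W ^ 2 := by positivity
  have hH : 0 ≤ H := by
    by_contra! hlt
    have haH : 0 < a * H ^ 2 := mul_pos ha (sq_pos_of_neg hlt)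
    linarith [mul_nonneg (mul_nonneg hb (neg_nonneg.2 hlt.le)) hW0]
  refine ⟨hH, ?_⟩
  rcases hH.eq_or_lt with hH0 | hH0
  · rw [← hH0, mul_zero]
    exact mul_nonneg hb hW0
  · exact le_of_mul_le_mul_right (by linarith) hH0

section OneStep

variable {a b c v δ : ℝ}

theorem pos_of_barrier (ha : 0 < a) (hb : 0 ≤ b) (hc : 0 ≤ c) (hv : 0 ≤ v)
    (hdisc : 4 * a * c ≤ b ^ 2) (hδ : v * b ≤ δ * a) :
    0 < a + δ * b + δ ^ 2 * c - v * c := by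
  have hvc : 4 * (v * c) ≤ δ * b := by
    refine le_of_mul_le_mul_left ?_ ha
    calc a * (4 * (v * c)) = v * (4 * a * c) := by ring
      _ ≤ v * b ^ 2 := mul_le_mul_of_nonneg_left hdisc hv
      _ = v * b * b := by ring
      _ ≤ δ * a * b := mul_le_mul_of_nonneg_right hδ hb
      _ = a * (δ * b) := by ring
  have hδc : 0 ≤ δ ^ 2 * c := by positivity
  linarith [mul_nonneg hv hc]

theorem slope_mul_le_of_barrier {a' b' c' : ℝ} (ha : 0 < a) (hb : 0 ≤ b) (hc : 0 ≤ c)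
    (hv : 0 ≤ v) (hδ : v * b ≤ δ * a)
    (hW : ∀ s : ℝ, (a + s * b + s ^ 2 * c) * (b' + 2 * s * c')
      ≤ (a' + s * b' + s ^ 2 * c') * (b + 2 * s * c)) :
    (a' + δ * b' + δ ^ 2 * c' - v * c') * a ≤ a' * (a + δ * b + δ ^ 2 * c - v * c) := by
  obtain ⟨hH, hbound⟩ := wronskian_bounds ha hb hc hW
  have hW0 : 0 ≤ b * a' - a * b' := by linarith [hW 0]
  have hvH : v * (c * a' - a * c') ≤ δ * (b * a' - a * b') := by
    refine le_of_mul_le_mul_left ?_ ha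
    linarith [mul_le_mul_of_nonneg_left hbound hv, mul_le_mul_of_nonneg_right hδ hW0]
  linarith [mul_nonneg (sq_nonneg δ) hH]

end OneStep

variable {ι : Type*} [DecidableEq ι] {F : (ι → ℝ) → ℝ}

theorem SeparatelyQuadratic.linCoeff_add_single_self (hq : SeparatelyQuadratic F) (i : ι) (s : ℝ)
    (z : ι → ℝ) : linCoeff i F (z + Pi.single i s) = linCoeff i F z + 2 * s * quadCoeff i F z := by
  rw [linCoeff_apply, add_assoc, add_assoc, ← Pi.single_add, ← Pi.single_add,
    hq.apply_add_single, hq.apply_add_single, smul_eq_mul]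
  ring

theorem SeparatelyQuadratic.quadCoeff_add_single_self (hq : SeparatelyQuadratic F) (i : ι) (s : ℝ)
    (z : ι → ℝ) : quadCoeff i F (z + Pi.single i s) = quadCoeff i F z := by
  rw [quadCoeff_apply, add_assoc, add_assoc, ← Pi.single_add, ← Pi.single_add,
    hq.apply_add_single, hq.apply_add_single, hq.apply_add_single, smul_eq_mul]
  ring

theorem SeparatelyQuadratic.linCoeff_linCoeff_self (hq : SeparatelyQuadratic F) (i : ι)
    (z : ι → ℝ) : linCoeff i (linCoeff i F) z = 2 * quadCoeff i F z := by
  rw [linCoeff_apply, hq.linCoeff_add_single_self, hq.linCoeff_add_single_self, smul_eq_mul]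
  ring

theorem Rayleigh.four_mul_quadCoeff_le (hR : Rayleigh F) (hq : SeparatelyQuadratic F) (i : ι)
    (z : ι → ℝ) : 4 * F z * quadCoeff i F z ≤ linCoeff i F z ^ 2 := by
  set a := F z with ha
  set b := linCoeff i F z with hb
  set c := quadCoeff i F z with hc
  rcases eq_or_ne c 0 with hc0 | hc0
  · rw [hc0, mul_zero]
    exact sq_nonneg b
  have hdisc : (2 * b * c) ^ 2 - 4 * (2 * c ^ 2) * (b ^ 2 - 2 * a * c) ≤ 0 := by
    refine discrim_le_zero fun s => ?_
    have := hR (z + Pi.single i s) i i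
    rw [hq.apply_add_single, hq.linCoeff_linCoeff_self, hq.linCoeff_add_single_self,
      hq.quadCoeff_add_single_self, ← ha, ← hb, ← hc] at this
    linarith
  refine le_of_mul_le_mul_left ?_ (by positivity : 0 < 4 * c ^ 2)
  linarith

/-- On the orthant above `z₀`, `F` is positive and its logarithmic partial derivatives are at most
`δⱼ / vⱼ`. -/
def HasBarrier (v δ : ι → ℝ) (F : (ι → ℝ) → ℝ) (z₀ : ι → ℝ) : Prop :=
  ∀ z, z₀ ≤ z → 0 < F z ∧ ∀ j, v j * linCoeff j F z ≤ δ j * F z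

theorem HasBarrier.varianceOp {v δ z₀ : ι → ℝ} (h : HasBarrier v δ F z₀)
    (hq : SeparatelyQuadratic F) (hR : Rayleigh F) (hv : ∀ j, 0 ≤ v j) (i : ι) :
    HasBarrier v δ (varianceOp (v i) i F) (z₀ + Pi.single i (δ i)) := by
  intro z hz
  obtain ⟨y, rfl⟩ : ∃ y, z = y + Pi.single i (δ i) :=
    ⟨z - Pi.single i (δ i), (sub_add_cancel _ _).symm⟩
  replace hz : z₀ ≤ y := le_of_add_le_add_right hz
  have hpos (s : ℝ) (hs : 0 ≤ s) : 0 < F y + s * linCoeff i F y + s ^ 2 * quadCoeff i F y := by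
    rw [← hq.apply_add_single]
    exact (h _ (le_add_of_le_of_nonneg hz (Pi.single_nonneg.2 hs))).1
  obtain ⟨ha, hlog⟩ := h y hz
  have hdisc := hR.four_mul_quadCoeff_le hq i y
  obtain ⟨hb, hc⟩ := nonneg_coeffs_of_pos_of_real_roots hpos hdisc
  have hvalue {G : (ι → ℝ) → ℝ} (hG : SeparatelyQuadratic G) :
      SpectralRounding.varianceOp (v i) i G (y + Pi.single i (δ i)) = G y + δ i * linCoeff i G y
        + δ i ^ 2 * quadCoeff i G y - v i * quadCoeff i G y := by
    rw [varianceOp_apply, hG.apply_add_single, hG.quadCoeff_add_single_self, smul_eq_mul]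
  rw [hvalue hq]
  refine ⟨pos_of_barrier ha hb hc (hv i) hdisc (hlog i), fun j => ?_⟩
  have hqj := hq.map (linCoeff_mem j)
  have hslope := slope_mul_le_of_barrier (a' := linCoeff j F y) (b' := linCoeff i (linCoeff j F) y)
    (c' := quadCoeff i (linCoeff j F) y) ha hb hc (hv i) (hlog i) fun s => by
      have := hR (y + Pi.single i s) j i
      rwa [hq.apply_add_single, hqj.linCoeff_add_single_self, hqj.apply_add_single,
        hq.linCoeff_add_single_self] at this
  rw [← apply_comm_of_mem_differenceOperators (varianceOp_mem _ i) (linCoeff_mem j), hvalue hqj]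
  refine le_of_mul_le_mul_right ?_ ha
  have := mul_le_mul_of_nonneg_left hslope (hv j)
  have := mul_le_mul_of_nonneg_right (hlog j) (pos_of_barrier ha hb hc (hv i) hdisc (hlog i)).le
  linarith

theorem HasBarrier.varianceProd {v δ z₀ : ι → ℝ} (h : HasBarrier v δ F z₀)
    (hq : SeparatelyQuadratic F) (hR : ∀ l, Rayleigh (varianceProd v l F)) (hv : ∀ j, 0 ≤ v j)
    (l : List ι) :
    HasBarrier v δ (varianceProd v l F) (z₀ + (l.map fun i => Pi.single i (δ i)).sum) := by
  induction l with
  | nil => rwa [List.map_nil, List.sum_nil, add_zero]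
  | cons i l ih =>
    rw [varianceProd_cons_apply, List.map_cons, List.sum_cons, add_comm (Pi.single i _),
      ← add_assoc]
    exact ih.varianceOp (hq.map (varianceProd_mem v l)) (hR l) hv i

end Barrier

section Pencil

variable {ι N R S : Type*} [Fintype ι]

/-- The matrix `∑ zᵢ wᵢ wᵢᵀ`; for the edge vectors of a graph it is the weighted Laplacian. -/
def weightedGram [CommSemiring R] (w : ι → N → R) (z : ι → R) : Matrix N N R :=
  ∑ i, z i • vecMulVec (w i) (w i)

theorem weightedGram_add_single [DecidableEq ι] [CommRing R] (w : ι → N → R) (z : ι → R) (i : ι)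
    (s : R) :
    weightedGram w (z + Pi.single i s) = weightedGram w z + s • vecMulVec (w i) (w i) := by
  simp only [weightedGram, Pi.add_apply, add_smul, Finset.sum_add_distrib, add_right_inj]
  rw [Finset.sum_eq_single i, Pi.single_eq_same]
  · exact fun j _ hj => by rw [Pi.single_eq_of_ne hj, zero_smul]
  · exact fun hi => absurd (Finset.mem_univ i) hi

theorem isHermitian_weightedGram (w : ι → N → ℝ) (z : ι → ℝ) : (weightedGram w z).IsHermitian := by
  ext i j
  simp [weightedGram, Matrix.sum_apply, vecMulVec_apply, mul_comm]

variable [Fintype N]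

theorem dotProduct_weightedGram_mulVec [CommRing R] (w : ι → N → R) (z : ι → R) (u y : N → R) :
    u ⬝ᵥ weightedGram w z *ᵥ y = ∑ i, z i * ((u ⬝ᵥ w i) * (w i ⬝ᵥ y)) := by
  rw [weightedGram, sum_mulVec, dotProduct_sum]
  refine Finset.sum_congr rfl fun i _ => ?_
  rw [smul_mulVec, dotProduct_smul, vecMulVec_mulVec, op_smul_eq_smul, dotProduct_smul,
    smul_eq_mul, smul_eq_mul, mul_comm (w i ⬝ᵥ y)]

variable [DecidableEq N]

/- By a Schur complement, the left side is a determinant bordered by one row that is affine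
in `s`. -/
theorem det_add_smul_vecMulVec [CommRing R] (A : Matrix N N R) (u : N → R) (s : R) :
    (A + s • vecMulVec u u).det = A.det
      + s * (fromBlocks A (-replicateCol Unit u) (replicateRow Unit u) 0).det := by
  set B : Matrix (N ⊕ Unit) (N ⊕ Unit) R := fromBlocks A (-replicateCol Unit u) 0 1 with hB
  calc (A + s • vecMulVec u u).det
      = (fromBlocks A (-replicateCol Unit u) (replicateRow Unit (s • u)) 1).det := by
        rw [det_fromBlocks_one₂₂, Matrix.neg_mul, sub_neg_eq_add,
          replicateRow_smul, Matrix.mul_smul, ← vecMulVec_eq]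
    _ = (B.updateRow (Sum.inr ())
          (Sum.elim (0 : N → R) (1 : Unit → R) + s • Sum.elim u 0)).det := by
        congr 1
        ext (i | i) (j | j) <;> simp [hB, updateRow_apply]
    _ = B.det + s * (B.updateRow (Sum.inr ()) (Sum.elim u 0)).det := by
        rw [det_updateRow_add, det_updateRow_smul]
        congr 2
        ext (i | i) (j | j) <;> simp [hB, updateRow_apply]
    _ = _ := by
        rw [hB, det_fromBlocks_zero₂₁, det_one, mul_one]
        congr 3
        ext (i | i) (j | j) <;> simp [updateRow_apply]

variable [CommRing R] [Algebra ℝ R] [CommRing S] [Algebra ℝ S]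

/-- The determinant of `x + ∑ zᵢ wᵢ wᵢᵀ`, over any algebra `R` over the reals. -/
def pencil (w : ι → N → ℝ) (x : R) (z : ι → R) : R :=
  (x • 1 + weightedGram (fun i => algebraMap ℝ R ∘ w i) z).det

theorem intertwines_pencil (f : R →ₐ[ℝ] S) (w : ι → N → ℝ) (x : R) :
    Intertwines f (pencil w x) (pencil w (f x)) := by
  intro z
  rw [pencil, pencil, AlgHom.map_det]
  congr 1
  ext a b
  simp [weightedGram, Matrix.sum_apply, vecMulVec_apply, Matrix.one_apply, apply_ite f]

theorem separatelyAffine_pencil [DecidableEq ι] (w : ι → N → ℝ) (x : R) :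
    SeparatelyAffine (pencil w x) := by
  refine .of_slope (fun i z => (fromBlocks (x • 1 + weightedGram (fun i => algebraMap ℝ R ∘ w i) z)
    (-replicateCol Unit (algebraMap ℝ R ∘ w i)) (replicateRow Unit (algebraMap ℝ R ∘ w i)) 0).det)
    fun i s z => ?_
  rw [pencil, weightedGram_add_single, ← add_assoc, det_add_smul_vecMulVec, pencil]

/- A null vector `y` would give `x |y|² + ∑ zᵢ |wᵢ ⬝ y|² = 0`, whose imaginary part is positive. -/
theorem stronglyStable_pencil (w : ι → N → ℝ) {x : ℂ} (hx : 0 < x.im) :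
    StronglyStable (pencil w x) := by
  intro z hz hdet
  obtain ⟨y, hy, hnull⟩ := exists_mulVec_eq_zero_iff.2 hdet
  have hconj (i : ι) : star y ⬝ᵥ (algebraMap ℝ ℂ ∘ w i)
      = starRingEnd ℂ ((algebraMap ℝ ℂ ∘ w i) ⬝ᵥ y) := by
    simp [dotProduct, mul_comm]
  have hnorm : star y ⬝ᵥ y = ((∑ j, Complex.normSq (y j) : ℝ) : ℂ) := by
    simp [dotProduct, Complex.normSq_eq_conj_mul_self]
  have hform : x * (∑ j, Complex.normSq (y j) : ℝ)
      + ∑ i, z i * (Complex.normSq ((algebraMap ℝ ℂ ∘ w i) ⬝ᵥ y) : ℝ) = 0 := by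
    have := congrArg (star y ⬝ᵥ ·) hnull
    simp only [add_mulVec, smul_mulVec, one_mulVec, dotProduct_add, dotProduct_smul, smul_eq_mul,
      dotProduct_zero, dotProduct_weightedGram_mulVec, hconj, hnorm,
      ← Complex.normSq_eq_conj_mul_self] at this
    exact this
  have him := congrArg Complex.im hform
  rw [Complex.add_im, Complex.im_mul_ofReal, Complex.im_sum, Complex.zero_im] at him
  obtain ⟨j, hj⟩ := Function.ne_iff.1 hy
  have hypos : 0 < ∑ j, Complex.normSq (y j) :=
    Finset.sum_pos' (fun _ _ => Complex.normSq_nonneg _)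
      ⟨j, Finset.mem_univ j, Complex.normSq_pos.2 hj⟩
  have hznonneg : 0 ≤ ∑ i, (z i * (Complex.normSq ((algebraMap ℝ ℂ ∘ w i) ⬝ᵥ y) : ℝ)).im :=
    Finset.sum_nonneg fun i _ => by
      rw [Complex.im_mul_ofReal]
      exact mul_nonneg (hz i) (Complex.normSq_nonneg _)
  linarith [mul_pos hx hypos]

end Pencil

section ExpectedPairing

open Polynomial

theorem continuous_of_intertwines_aeval {ι : Type*} {G : (ι → ℂ[X]) → ℂ[X]}
    {F : ℂ → (ι → ℂ) → ℂ}
       (h : ∀ x, Intertwines ((aeval x).restrictScalars ℝ) G (F x)) (z : ι → ℂ) :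
    Continuous fun x => F x z := by
  have heval (x : ℂ) : F x z = (G (C ∘ z)).eval x := by
    have hz : aeval x ∘ C ∘ z = z := funext fun i => aeval_C x (z i)
    rw [← hz]
    exact (h x (C ∘ z)).symm.trans (by rw [hz]; exact congrFun (coe_aeval_eq_eval x) _)
  simp only [heval]
  exact (G (C ∘ z)).continuous

variable {ι N : Type*} [DecidableEq ι] [Fintype ι] [DecidableEq N] [Fintype N]

section General

variable {R S : Type*} [CommRing R] [Algebra ℝ R] [CommRing S] [Algebra ℝ S]

/-- If `vᵢ` is the variance of the `i`-th of independent random variables for `i` in `l`, and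
`ξ` their mean, this is the expected pairing of the pencil. -/
noncomputable def expectedPairing (w : ι → N → ℝ) (v : ι → ℝ) (l : List ι) (ξ : ι → ℝ) (x : R) :
    (ι → R) → R :=
  varianceProd v l (pairing (pencil w x) (algebraMap ℝ R ∘ ξ))

theorem expectedPairing_cons (w : ι → N → ℝ) (v : ι → ℝ) (i : ι) (l : List ι) (ξ : ι → ℝ) (x : R) :
    expectedPairing w v (i :: l) ξ x = varianceOp (v i) i (expectedPairing w v l ξ x) :=
  varianceProd_cons_apply v i l _

theorem intertwines_expectedPairing (f : R →ₐ[ℝ] S) (w : ι → N → ℝ) (v : ι → ℝ) (l : List ι)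
    (ξ : ι → ℝ) (x : R) :
    Intertwines f (expectedPairing w v l ξ x) (expectedPairing w v l ξ (f x)) := by
  have h := (intertwines_pencil f w x).pairing (algebraMap ℝ R ∘ ξ)
  rw [show f ∘ algebraMap ℝ R ∘ ξ = algebraMap ℝ S ∘ ξ from funext fun i => f.commutes (ξ i)] at h
  exact h.varianceProd v l

theorem separatelyQuadratic_expectedPairing (w : ι → N → ℝ) (v : ι → ℝ) (l : List ι) (ξ : ι → ℝ)
    (x : R) : SeparatelyQuadratic (expectedPairing w v l ξ x) :=
  ((separatelyAffine_pencil w x).separatelyQuadratic_pairing _).map (varianceProd_mem v l)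

/- The instance of `SeparatelyAffine.average_pairing` in which the other variables are already
averaged. -/
theorem average_expectedPairing (w : ι → N → ℝ) (v : ι → ℝ) (l : List ι) (ξ : ι → ℝ) (i : ι)
    (s : ℝ) (x : R) :
    s • expectedPairing w v l (ξ + Pi.single i 1) x + (1 - s) • expectedPairing w v l ξ x
      = varianceOp (s * (1 - s)) i (expectedPairing w v l (ξ + Pi.single i s) x) := by
  have hmap (t : ℝ) : algebraMap ℝ R ∘ (ξ + Pi.single i t)
      = algebraMap ℝ R ∘ ξ + Pi.single i (algebraMap ℝ R t) := by
    ext j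
    rw [Function.comp_apply, Pi.add_apply, map_add, Pi.add_apply,
      Pi.apply_single (fun _ => algebraMap ℝ R) (fun _ => map_zero _), Function.comp_apply]
  simp only [expectedPairing, hmap, map_one]
  rw [apply_comm_of_mem_differenceOperators (varianceOp_mem _ i) (varianceProd_mem v l),
    ← (separatelyAffine_pencil w x).average_pairing, map_add, LinearMap.map_smul_of_tower,
    LinearMap.map_smul_of_tower]

end General

theorem stronglyStable_expectedPairing (w : ι → N → ℝ) {v : ι → ℝ} (hv : ∀ i, 0 ≤ v i)
    (l : List ι) (ξ : ι → ℝ) {x : ℂ} (hx : 0 < x.im) :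
    StronglyStable (expectedPairing w v l ξ x) :=
  ((stronglyStable_pencil w hx).pairing fun i => Complex.ofReal_im (ξ i)).varianceProd
    ((separatelyAffine_pencil w x).separatelyQuadratic_pairing _) hv l

/- For real `x` the pencil itself may vanish on the closed upper half-space, so `x` is approached
from the upper half-plane. -/
theorem rayleigh_expectedPairing (w : ι → N → ℝ) {v : ι → ℝ} (hv : ∀ i, 0 ≤ v i) (l : List ι)
    (ξ : ι → ℝ) (x : ℝ) : Rayleigh (expectedPairing w v l ξ x) := by
  have hintertwines (τ : ℂ) : Intertwines ((aeval τ).restrictScalars ℝ)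
      (expectedPairing w v l ξ (X : ℂ[X])) (expectedPairing w v l ξ τ) := by
    simpa only [AlgHom.restrictScalars_apply, aeval_X] using
      intertwines_expectedPairing ((aeval τ).restrictScalars ℝ) w v l ξ (X : ℂ[X])
  refine rayleigh_of_im_linCoeff_mul_conj_nonpos
    (separatelyQuadratic_expectedPairing w v l ξ (x : ℂ)) (fun z hz i => ?_)
    (intertwines_expectedPairing (Algebra.ofId ℝ ℂ) w v l ξ x)
  have hcont : Continuous fun η : ℝ => (linCoeff i (expectedPairing w v l ξ (x + η * Complex.I)) z
      * starRingEnd ℂ (expectedPairing w v l ξ (x + η * Complex.I) z)).im := by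
    have hF := continuous_of_intertwines_aeval hintertwines z
    have hD := continuous_of_intertwines_aeval (fun τ => (hintertwines τ).linCoeff i) z
    exact Complex.continuous_im.comp <|
      (hD.comp (by fun_prop)).mul (Complex.continuous_conj.comp (hF.comp (by fun_prop)))
  have hlim := tendsto_nhdsWithin_of_tendsto_nhds (s := Set.Ioi 0) (hcont.tendsto 0)
  simp only [Complex.ofReal_zero, zero_mul, add_zero] at hlim
  refine le_of_tendsto hlim (eventually_mem_nhdsWithin.mono fun η (hη : 0 < η) => ?_)
  refine (stronglyStable_expectedPairing w hv l ξ ?_).im_linCoeff_mul_conj_nonpos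
    (separatelyQuadratic_expectedPairing w v l ξ _) hz i
  simpa using hη

end ExpectedPairing

section BaseBarrier

variable {N : Type*} [Fintype N]

theorem dotProduct_sq_le (u y : N → ℝ) : (u ⬝ᵥ y) ^ 2 ≤ (u ⬝ᵥ u) * (y ⬝ᵥ y) := by
  simpa only [dotProduct, sq] using Finset.sum_mul_sq_le_sq_mul_sq Finset.univ u y

theorem posDef_of_mul_dotProduct_le {A : Matrix N N ℝ} (hA : A.IsHermitian) {κ : ℝ} (hκ : 0 < κ)
    (h : ∀ y, κ * (y ⬝ᵥ y) ≤ y ⬝ᵥ A *ᵥ y) : A.PosDef :=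
  .of_dotProduct_mulVec_pos hA fun y hy =>
    (mul_pos hκ (dotProduct_star_self_pos_iff.2 hy)).trans_le (h y)

/- By the matrix determinant lemma `det (A + u uᵀ) - det A = (u ⬝ A⁻¹ u) det A`. -/
theorem mul_det_add_vecMulVec_sub_det_le [DecidableEq N] {A : Matrix N N ℝ} (hA : A.IsHermitian)
    {κ : ℝ} (hκ : 0 < κ) (h : ∀ y, κ * (y ⬝ᵥ y) ≤ y ⬝ᵥ A *ᵥ y) (u : N → ℝ) :
    κ * ((A + vecMulVec u u).det - A.det) ≤ (u ⬝ᵥ u) * A.det := by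
  have hdet := (posDef_of_mul_dotProduct_le hA hκ h).det_pos
  have hunit := isUnit_iff_ne_zero.2 hdet.ne'
  set y := A⁻¹ *ᵥ u with hy
  have hrank : (A + vecMulVec u u).det = A.det * (1 + u ⬝ᵥ y) := by
    rw [vecMulVec_eq Unit, det_add_replicateCol_mul_replicateRow hunit, det_unique (n := Unit),
      Matrix.mul_assoc, ← replicateCol_mulVec]
    rfl
  have hquad : κ * (y ⬝ᵥ y) ≤ u ⬝ᵥ y := by
    have := h y
    rwa [hy, mulVec_mulVec, mul_nonsing_inv _ hunit, one_mulVec, ← hy, dotProduct_comm y u] at this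
  have hyy : 0 ≤ y ⬝ᵥ y := dotProduct_star_self_nonneg y
  have hle : κ * (u ⬝ᵥ y) ≤ u ⬝ᵥ u := by
    rcases (mul_nonneg hκ.le hyy).trans hquad |>.eq_or_lt with h0 | h0
    · rw [← h0, mul_zero]
      exact dotProduct_star_self_nonneg u
    · refine le_of_mul_le_mul_right ?_ h0
      calc κ * (u ⬝ᵥ y) * (u ⬝ᵥ y) = κ * (u ⬝ᵥ y) ^ 2 := by ring
        _ ≤ κ * ((u ⬝ᵥ u) * (y ⬝ᵥ y)) := mul_le_mul_of_nonneg_left (dotProduct_sq_le u y) hκ.le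
        _ = (u ⬝ᵥ u) * (κ * (y ⬝ᵥ y)) := by ring
        _ ≤ (u ⬝ᵥ u) * (u ⬝ᵥ y) :=
          mul_le_mul_of_nonneg_left hquad (dotProduct_star_self_nonneg u)
  rw [hrank]
  linarith [mul_le_mul_of_nonneg_right hle hdet.le]

variable {ι : Type*} [Fintype ι] {w : ι → N → ℝ} {v : ι → ℝ} {α t : ℝ}

theorem le_sum_mul_dotProduct_sq (hα : 0 < α) {z : ι → ℝ}
    (hz : ∀ i, -(4 * v i * (w i ⬝ᵥ w i) / α) ≤ z i)
    (hvar : ∀ y, 8 * ∑ i, v i * (w i ⬝ᵥ w i) * (w i ⬝ᵥ y) ^ 2 ≤ α ^ 2 * (y ⬝ᵥ y)) (y : N → ℝ) :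
    -(α / 2 * (y ⬝ᵥ y)) ≤ ∑ i, z i * (w i ⬝ᵥ y) ^ 2 := by
  have hsum : ∑ i, -(4 * v i * (w i ⬝ᵥ w i) / α) * (w i ⬝ᵥ y) ^ 2
      = -(8 * ∑ i, v i * (w i ⬝ᵥ w i) * (w i ⬝ᵥ y) ^ 2) / (2 * α) := by
    rw [Finset.mul_sum, ← Finset.sum_neg_distrib, Finset.sum_div]
    exact Finset.sum_congr rfl fun i _ => by field_simp; ring
  calc -(α / 2 * (y ⬝ᵥ y))
      ≤ ∑ i, -(4 * v i * (w i ⬝ᵥ w i) / α) * (w i ⬝ᵥ y) ^ 2 := by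
        rw [hsum, le_div_iff₀ (by positivity)]
        linarith [hvar y]
    _ ≤ ∑ i, z i * (w i ⬝ᵥ y) ^ 2 :=
        Finset.sum_le_sum fun i _ => mul_le_mul_of_nonneg_right (hz i) (sq_nonneg _)

variable [DecidableEq ι] [DecidableEq N]

theorem hasBarrier_pairing_pencil (hα : 0 < α) (ht : α ≤ t) (hv : ∀ i, 0 ≤ v i)
    (hvar : ∀ y, 8 * ∑ i, v i * (w i ⬝ᵥ w i) * (w i ⬝ᵥ y) ^ 2 ≤ α ^ 2 * (y ⬝ᵥ y)) :
    HasBarrier v (fun i => 4 * v i * (w i ⬝ᵥ w i) / α) (pairing (pencil w t) 0)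
      (-fun i => 4 * v i * (w i ⬝ᵥ w i) / α) := by
  intro z hz
  set A : Matrix N N ℝ := t • 1 + weightedGram w z with hA_def
  have hA : A.IsHermitian :=
    (isHermitian_one.smul (star_trivial t)).add (isHermitian_weightedGram w z)
  have hlower (y : N → ℝ) : α / 2 * (y ⬝ᵥ y) ≤ y ⬝ᵥ A *ᵥ y := by
    have hz' := le_sum_mul_dotProduct_sq hα hz hvar y
    have hty := mul_le_mul_of_nonneg_right ht (dotProduct_star_self_nonneg y)
    rw [star_trivial] at hty
    simp only [hA_def, add_mulVec, smul_mulVec, one_mulVec, dotProduct_add, dotProduct_smul,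
      smul_eq_mul, dotProduct_weightedGram_mulVec, dotProduct_comm y (w _), ← sq]
    linarith
  have hpencil : pencil w t z = A.det := rfl
  have hpos : 0 < A.det := (posDef_of_mul_dotProduct_le hA (half_pos hα) hlower).det_pos
  have hslope (j : ι) : linCoeff j (pencil w t) z = (A + vecMulVec (w j) (w j)).det - A.det := by
    have h := (separatelyAffine_pencil w t).apply_add_single j 1 z
    rw [one_mul, ← sub_eq_iff_eq_add', hpencil] at h
    rw [← h, pencil, weightedGram_add_single, one_smul, ← add_assoc]
    rfl
  have hvalue : pairing (pencil w t) 0 z = A.det ^ 2 := by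
    rw [pairing, sub_zero, add_zero, hpencil, sq]
  refine ⟨by rw [hvalue]; positivity, fun j => ?_⟩
  have hrank := mul_det_add_vecMulVec_sub_det_le hA (half_pos hα) hlower (w j)
  rw [← hslope] at hrank
  rw [hvalue, (separatelyAffine_pencil w t).linCoeff_pairing, sub_zero, add_zero, hpencil,
    div_mul_eq_mul_div, le_div_iff₀ hα]
  have := mul_le_mul_of_nonneg_left hrank (mul_nonneg (hv j) hpos.le)
  linarith

theorem expectedPairing_univ_pos (hα : 0 < α) (ht : α ≤ t) (hv : ∀ i, 0 ≤ v i)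
    (hvar : ∀ y, 8 * ∑ i, v i * (w i ⬝ᵥ w i) * (w i ⬝ᵥ y) ^ 2 ≤ α ^ 2 * (y ⬝ᵥ y)) :
    0 < expectedPairing w v Finset.univ.toList 0 t 0 := by
  have h := (hasBarrier_pairing_pencil hα ht hv hvar).varianceProd
    ((separatelyAffine_pencil w t).separatelyQuadratic_pairing 0)
    (fun l => rayleigh_expectedPairing w hv l 0 t) hv Finset.univ.toList
  rw [Finset.sum_map_toList, Finset.univ_sum_single, neg_add_cancel] at h
  exact (h 0 le_rfl).1

end BaseBarrier

section RealRooted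

open Polynomial

theorem splits_of_aeval_ne_zero {p : ℝ[X]} (h : ∀ τ : ℂ, 0 < τ.im → aeval τ p ≠ 0) :
    p.Splits := by
  refine .of_splits_map_of_injective (algebraMap ℝ ℂ).injective (IsAlgClosed.splits _)
    fun τ hτ => ?_
  have hroot : aeval τ p = 0 := by
    rw [aeval_def, ← eval_map]
    exact isRoot_of_mem_roots hτ
  rcases lt_trichotomy τ.im 0 with hneg | hreal | hpos
  · refine absurd ?_ (h (starRingEnd ℂ τ) (by simpa using hneg))
    rw [aeval_conj, hroot, map_zero]
  · exact ⟨τ.re, Complex.ext rfl hreal.symm⟩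
  · exact absurd hroot (h τ hpos)

/-- A positive local minimum is attained only if `f` is constant. -/
def NoPositiveLocalMin (f : ℝ → ℝ) : Prop :=
  ∀ c, 0 < f c → IsLocalMin f c → ∀ t, f t = f c

theorem eval_add_mul_eval_sub_of_splits {p : ℝ[X]} (hp : p.Splits) (c y : ℝ) :
    p.eval (c + y) * p.eval (c - y)
      = p.leadingCoeff ^ 2 * (p.roots.map fun a => (c - a) ^ 2 - y ^ 2).prod := by
  rw [hp.eval_eq_prod_roots, hp.eval_eq_prod_roots, mul_mul_mul_comm, ← sq,
    ← Multiset.prod_map_mul]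
  congr 3
  ext a
  ring

/- The product of `(c - a) ^ 2 - y ^ 2` over the roots `a` decreases strictly in `|y|` near `0`,
whereas at a local minimum both `p (c + y)` and `p (c - y)` are at least `p c`. -/
theorem noPositiveLocalMin_eval_of_splits {p : ℝ[X]} (hp : p.Splits) :
    NoPositiveLocalMin (p.eval ·) := by
  intro c hc hmin
  suffices hdeg : p.natDegree = 0 by
    intro t
    rw [eq_C_of_natDegree_eq_zero hdeg]
    simp only [eval_C]
  by_contra hdeg
  have hroot (a : ℝ) (ha : a ∈ p.roots) : c ≠ a := by
    rintro rfl
    exact hc.ne' (isRoot_of_mem_roots ha)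
  have hsmall : ∀ᶠ y in nhds (0 : ℝ), ∀ a ∈ p.roots.toFinset, 0 < (c - a) ^ 2 - y ^ 2 := by
    refine (Finset.eventually_all _).2 fun a ha => ?_
    have hcont : Continuous fun y : ℝ => (c - a) ^ 2 - y ^ 2 := by fun_prop
    have hca := sub_ne_zero.2 (hroot a (Multiset.mem_toFinset.1 ha))
    exact (hcont.tendsto' 0 ((c - a) ^ 2) (by simp)).eventually_const_lt
      (by positivity)
  have hadd : ∀ᶠ y in nhds (0 : ℝ), p.eval c ≤ p.eval (c + y) :=
    (by fun_prop : Continuous fun y : ℝ => c + y).tendsto' 0 c (add_zero c) |>.eventually hmin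
  have hsub : ∀ᶠ y in nhds (0 : ℝ), p.eval c ≤ p.eval (c - y) :=
    (by fun_prop : Continuous fun y : ℝ => c - y).tendsto' 0 c (sub_zero c) |>.eventually hmin
  obtain ⟨y, ⟨hy, hyadd, hysub⟩, hy0 : 0 < y⟩ :=
    ((hsmall.and (hadd.and hsub)).filter_mono nhdsWithin_le_nhds |>.and
      (self_mem_nhdsWithin (s := Set.Ioi (0 : ℝ)))).exists
  have hlt : p.eval (c + y) * p.eval (c - y) < p.eval (c + 0) * p.eval (c - 0) := by
    have hp0 : p ≠ 0 := by
      rintro rfl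
      exact hdeg natDegree_zero
    rw [eval_add_mul_eval_sub_of_splits hp, eval_add_mul_eval_sub_of_splits hp]
    refine mul_lt_mul_of_pos_left ?_ (sq_pos_of_ne_zero (leadingCoeff_ne_zero.2 hp0))
    refine Multiset.prod_map_lt_prod_map (hp.roots_ne_zero hdeg) _ _
      (fun a ha => hy a (Multiset.mem_toFinset.2 ha)) fun a _ => ?_
    have := pow_pos hy0 2
    linarith
  rw [add_zero, sub_zero] at hlt
  exact hlt.not_ge (mul_le_mul hyadd hysub hc.le (hc.le.trans hyadd))

end RealRooted

section ConvexCombination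

variable {p q : ℝ → ℝ}

theorem exists_isMinOn_Icc_eq {r : ℝ → ℝ → ℝ} (hr : Continuous (Function.uncurry r))
    {s₁ s₂ a d κ : ℝ} (hs : s₁ ≤ s₂) (hlow : ∃ b ∈ Set.Icc a d, r s₁ b ≤ κ)
    (hhigh : ∀ t ∈ Set.Icc a d, κ ≤ r s₂ t) :
    ∃ s ∈ Set.Icc s₁ s₂, ∃ c ∈ Set.Icc a d, r s c = κ ∧ IsMinOn (r s) (Set.Icc a d) c := by
  obtain ⟨b, hb, hbκ⟩ := hlow
  have hattained (s : ℝ) : ∃ c ∈ Set.Icc a d, sInf (r s '' Set.Icc a d) = r s c ∧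
      ∀ t ∈ Set.Icc a d, r s c ≤ r s t :=
    isCompact_Icc.exists_sInf_image_eq_and_le ⟨b, hb⟩ (hr.uncurry_left s).continuousOn
  obtain ⟨s, hs, hsκ⟩ : κ ∈ (fun s => sInf (r s '' Set.Icc a d)) '' Set.Icc s₁ s₂ := by
    refine intermediate_value_Icc hs (isCompact_Icc.continuous_sInf hr).continuousOn ⟨?_, ?_⟩
    · obtain ⟨c, -, hc, hmin⟩ := hattained s₁
      exact hc.trans_le ((hmin b hb).trans hbκ)
    · obtain ⟨c, hcmem, hc, -⟩ := hattained s₂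
      exact (hhigh c hcmem).trans_eq hc.symm
  obtain ⟨c, hcmem, hc, hmin⟩ := hattained s
  exact ⟨s, hs, c, hcmem, hc.symm.trans hsκ, hmin⟩

theorem exists_isLocalMin_convexComb_lt (hp : Continuous p) (hq : Continuous q) {a b d s₀ κ : ℝ}
    (hab : a < b) (hbd : b < d) (hs₀ : 0 ≤ s₀) (hqb : q b ≤ 0) (hκ : 0 < κ)
    (hpos : ∀ t ∈ Set.Icc a d, 0 < s₀ * p t + (1 - s₀) * q t)
    (hκa : ∀ s ∈ Set.Icc 0 s₀, κ ≤ s * p a + (1 - s) * q a)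
    (hκd : ∀ s ∈ Set.Icc 0 s₀, κ ≤ s * p d + (1 - s) * q d) :
    ∃ s ∈ Set.Icc 0 s₀, ∃ c, 0 < s * p c + (1 - s) * q c ∧ s * p c + (1 - s) * q c < κ ∧
      IsLocalMin (fun t => s * p t + (1 - s) * q t) c := by
  set r : ℝ → ℝ → ℝ := fun s t => s * p t + (1 - s) * q t with hr
  have hrcont : Continuous (Function.uncurry r) := by
    simp only [hr, Function.uncurry_def]
    fun_prop
  have hbmem : b ∈ Set.Icc a d := ⟨hab.le, hbd.le⟩
  obtain ⟨t₀, ht₀, ht₀min⟩ :=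
    isCompact_Icc.exists_isMinOn ⟨b, hbmem⟩ (hrcont.uncurry_left s₀).continuousOn
  have hmin : 0 < min (r s₀ t₀) κ := lt_min (hpos t₀ ht₀) hκ
  have hlow : r 0 b ≤ min (r s₀ t₀) κ / 2 := by
    refine le_trans ?_ (half_pos hmin).le
    simpa [hr] using hqb
  obtain ⟨s, hs, c, ⟨hac, hcd⟩, hc, hcmin⟩ := exists_isMinOn_Icc_eq hrcont hs₀ ⟨b, hbmem, hlow⟩
    fun t ht => ((half_lt_self hmin).le.trans (min_le_left _ _)).trans (ht₀min ht)
  have hcκ : r s c < κ := hc.trans_lt ((half_lt_self hmin).trans_le (min_le_right _ _))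
  have hca : a ≠ c := by
    rintro rfl
    exact hcκ.not_ge (hκa s hs)
  have hcd' : c ≠ d := by
    rintro rfl
    exact hcκ.not_ge (hκd s hs)
  exact ⟨s, hs, c, (half_pos hmin).trans_eq hc.symm, hcκ,
    hcmin.isLocalMin (Icc_mem_nhds (hac.lt_of_ne hca) (hcd.lt_of_ne hcd'))⟩

theorem pos_of_convexComb_pos_of_nonpos (hp : Continuous p) (hq : Continuous q)
    (hp_top : ∀ᶠ t in Filter.atTop, 0 < p t) (hq_top : ∀ᶠ t in Filter.atTop, 0 < q t)
    (hmin : ∀ s ∈ Set.Icc (0 : ℝ) 1, NoPositiveLocalMin fun t => s * p t + (1 - s) * q t)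
    {s₀ a : ℝ} (hs₀ : s₀ ∈ Set.Icc (0 : ℝ) 1)
    (hpos : ∀ t, a ≤ t → 0 < s₀ * p t + (1 - s₀) * q t) (hpa : p a ≤ 0) {b : ℝ} (hab : a < b) :
    0 < q b := by
  by_contra! hqb
  obtain ⟨d, hpd, hqd, hbd⟩ := (hp_top.and (hq_top.and (Filter.eventually_gt_atTop b))).exists
  have hκ : 0 < min (s₀ * p a + (1 - s₀) * q a) (min (p d) (q d)) :=
    lt_min (hpos a le_rfl) (lt_min hpd hqd)
  have hqa : 0 ≤ q a := by
    by_contra! hqa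
    have := mul_nonneg hs₀.1 (neg_nonneg.2 hpa)
    have := mul_nonneg (sub_nonneg.2 hs₀.2) (neg_nonneg.2 hqa.le)
    linarith [hpos a le_rfl]
  obtain ⟨s, hs, c, hc, hcκ, hlocal⟩ := exists_isLocalMin_convexComb_lt hp hq hab hbd hs₀.1 hqb hκ
    (fun t ht => hpos t ht.1)
    (fun s hs => (min_le_left _ _).trans (by
      linarith [mul_nonneg (sub_nonneg.2 hs.2) (sub_nonneg.2 (hpa.trans hqa))]))
    (fun s hs => (min_le_right _ _).trans (by
      have := mul_le_mul_of_nonneg_left (min_le_left (p d) (q d)) hs.1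
      have := mul_le_mul_of_nonneg_left (min_le_right (p d) (q d))
        (sub_nonneg.2 (hs.2.trans hs₀.2))
      linarith))
  have hs1 : s ≤ 1 := hs.2.trans hs₀.2
  have hconst := hmin s ⟨hs.1, hs1⟩ c hc hlocal a
  have := hcκ.trans_le (min_le_left _ _)
  linarith [mul_nonneg (sub_nonneg.2 hs.2) (sub_nonneg.2 (hpa.trans hqa))]

/- Deform a positive combination towards whichever of `p` and `q` is nonpositive further to the
right: before positivity is lost there, a positive local minimum appears. -/
theorem pos_or_pos_of_convexComb_pos (hp : Continuous p) (hq : Continuous q)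
    (hp_top : ∀ᶠ t in Filter.atTop, 0 < p t) (hq_top : ∀ᶠ t in Filter.atTop, 0 < q t)
    (hmin : ∀ s ∈ Set.Icc (0 : ℝ) 1, NoPositiveLocalMin fun t => s * p t + (1 - s) * q t)
    {s₀ α : ℝ} (hs₀ : s₀ ∈ Set.Icc (0 : ℝ) 1)
    (hpos : ∀ t, α ≤ t → 0 < s₀ * p t + (1 - s₀) * q t) :
    (∀ t, α ≤ t → 0 < p t) ∨ ∀ t, α ≤ t → 0 < q t := by
  by_contra! h
  obtain ⟨⟨a, hαa, hpa⟩, b, hαb, hqb⟩ := h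
  rcases lt_trichotomy a b with hab | rfl | hba
  · exact hqb.not_gt <| pos_of_convexComb_pos_of_nonpos hp hq hp_top hq_top hmin hs₀
      (fun t ht => hpos t (hαa.trans ht)) hpa hab
  · have := mul_nonneg hs₀.1 (neg_nonneg.2 hpa)
    have := mul_nonneg (sub_nonneg.2 hs₀.2) (neg_nonneg.2 hqb)
    linarith [hpos a hαa]
  · have hswap (s t : ℝ) : s * q t + (1 - s) * p t = (1 - s) * p t + (1 - (1 - s)) * q t := by ring
    refine hpa.not_gt <| pos_of_convexComb_pos_of_nonpos hq hp hq_top hp_top ?_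
      (s₀ := 1 - s₀) ⟨sub_nonneg.2 hs₀.2, sub_le_self _ hs₀.1⟩ ?_ hqb hba
    · intro s hs
      simp only [hswap]
      exact hmin (1 - s) ⟨sub_nonneg.2 hs.2, sub_le_self _ hs.1⟩
    · intro t ht
      rw [hswap, sub_sub_cancel]
      exact hpos t (hαb.trans ht)

end ConvexCombination

section Interlacing

open Polynomial

variable {ι N : Type*} [Fintype ι] [Fintype N] [DecidableEq N] (w : ι → N → ℝ)

theorem tendsto_pencil_div_pow (z : ι → ℝ) :
    Filter.Tendsto (fun t : ℝ => pencil w t z / t ^ Fintype.card N) Filter.atTop (nhds 1) := by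
  have hcont : Continuous fun s : ℝ => (1 + s • weightedGram w z).det := by fun_prop
  have hlim := (hcont.tendsto' 0 1 (by simp)).comp tendsto_inv_atTop_zero
  refine hlim.congr' ?_
  filter_upwards [Filter.eventually_ne_atTop 0] with t ht
  rw [eq_div_iff (pow_ne_zero _ ht), mul_comm, Function.comp_apply, ← det_smul, smul_add,
    smul_inv_smul₀ ht]
  rfl

variable [DecidableEq ι] (v : ι → ℝ)

theorem tendsto_expectedPairing_div_pow (l : List ι) (ξ z : ι → ℝ) :
    Filter.Tendsto
      (fun t : ℝ => expectedPairing w v l ξ t z / t ^ (Fintype.card N + Fintype.card N))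
      Filter.atTop (nhds 1) := by
  induction l generalizing z with
  | nil =>
    have := (tendsto_pencil_div_pow w (z - ξ)).mul (tendsto_pencil_div_pow w (z + ξ))
    simp only [div_mul_div_comm, ← pow_add, mul_one] at this
    exact this
  | cons i l ih =>
    have := (ih z).sub <| (((ih (z + Pi.single i 1)).add (ih (z + Pi.single i (-1)))).const_mul
      (2⁻¹ : ℝ) |>.sub (ih z)).const_mul (v i)
    rw [show 1 - v i * ((2⁻¹ : ℝ) * (1 + 1) - 1) = 1 by ring] at this
    refine this.congr fun t => ?_
    rw [expectedPairing_cons, varianceOp_apply, quadCoeff_apply, smul_eq_mul, smul_eq_mul]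
    ring

theorem eventually_expectedPairing_pos (l : List ι) (ξ z : ι → ℝ) :
    ∀ᶠ t : ℝ in Filter.atTop, 0 < expectedPairing w v l ξ t z := by
  filter_upwards [(tendsto_expectedPairing_div_pow w v l ξ z).eventually_const_lt one_pos,
    Filter.eventually_gt_atTop 0] with t ht ht0
  exact (div_pos_iff_of_pos_right (pow_pos ht0 _)).1 ht

theorem aeval_expectedPairing_X {A : Type*} [CommRing A] [Algebra ℝ A] (l : List ι)
    (ξ : ι → ℝ) (τ : A) :
    aeval τ (expectedPairing w v l ξ (X : ℝ[X]) 0) = expectedPairing w v l ξ τ 0 := by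
  rw [intertwines_expectedPairing (aeval τ) w v l ξ X 0, aeval_X]
  exact congrArg _ (funext fun _ => map_zero _)

variable {v}

/- Every combination is again an expected pairing, for another mean of the `i`-th variable, hence
real-rooted. -/
theorem noPositiveLocalMin_convexComb_expectedPairing (hv : ∀ i, 0 ≤ v i) (l : List ι)
    (ξ : ι → ℝ) (i : ι) {s : ℝ} (hs : s ∈ Set.Icc (0 : ℝ) 1) :
    NoPositiveLocalMin fun t : ℝ => s * expectedPairing w v l (ξ + Pi.single i 1) t 0
      + (1 - s) * expectedPairing w v l ξ t 0 := by
  set P : ℝ[X] := s • expectedPairing w v l (ξ + Pi.single i 1) X 0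
    + (1 - s) • expectedPairing w v l ξ X 0 with hP
  have haeval {A : Type} [CommRing A] [Algebra ℝ A] (τ : A) : aeval τ P
      = s • expectedPairing w v l (ξ + Pi.single i 1) τ 0
        + (1 - s) • expectedPairing w v l ξ τ 0 := by
    rw [hP, map_add, map_smul, map_smul, aeval_expectedPairing_X, aeval_expectedPairing_X]
  have hsplits : P.Splits := splits_of_aeval_ne_zero fun τ hτ => by
    have haverage := congrFun (average_expectedPairing w v l ξ i s τ) 0
    rw [haeval]
    refine haverage.trans_ne ?_
    refine (stronglyStable_expectedPairing w hv l _ hτ).varianceOp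
      (separatelyQuadratic_expectedPairing w v l _ τ) (mul_nonneg hs.1 (sub_nonneg.2 hs.2)) i 0 ?_
    simp
  have heval := noPositiveLocalMin_eval_of_splits hsplits
  simp only [← coe_aeval_eq_eval, haeval, smul_eq_mul] at heval
  exact heval

theorem expectedPairing_pos_of_varianceOp_pos (hv : ∀ i, 0 ≤ v i) (l : List ι) (ξ : ι → ℝ) (i : ι)
    {s : ℝ} (hs : s ∈ Set.Icc (0 : ℝ) 1) {α : ℝ}
    (hpos : ∀ t : ℝ, α ≤ t →
      0 < varianceOp (s * (1 - s)) i (expectedPairing w v l (ξ + Pi.single i s) t) 0) :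
    (∀ t : ℝ, α ≤ t → 0 < expectedPairing w v l (ξ + Pi.single i 1) t 0) ∨
      ∀ t : ℝ, α ≤ t → 0 < expectedPairing w v l ξ t 0 := by
  have hcont (ξ : ι → ℝ) : Continuous fun t : ℝ => expectedPairing w v l ξ t 0 :=
    (Polynomial.continuous_aeval _).congr fun t => aeval_expectedPairing_X w v l ξ t
  refine pos_or_pos_of_convexComb_pos (hcont _) (hcont _)
    (eventually_expectedPairing_pos w v l _ 0) (eventually_expectedPairing_pos w v l _ 0)
    (fun s hs => noPositiveLocalMin_convexComb_expectedPairing w hv l ξ i hs) hs fun t ht => ?_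
  exact (hpos t ht).trans_eq (congrFun (average_expectedPairing w v l ξ i s t) 0).symm

theorem exists_rounding_expectedPairing_pos {x : ι → ℝ} (hx : ∀ i, x i ∈ Set.Icc (0 : ℝ) 1) {α : ℝ}
    {l : List ι} (hl : l.Nodup) {ξ : ι → ℝ}
    (hpos : ∀ t : ℝ, α ≤ t → 0 < expectedPairing w (fun i => x i * (1 - x i)) l ξ t 0) :
    ∃ ζ : ι → ℝ, (∀ i ∉ l, ζ i = ξ i) ∧ (∀ i ∈ l, ζ i = ξ i - x i ∨ ζ i = ξ i - x i + 1) ∧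
      ∀ t : ℝ, α ≤ t → 0 < pairing (pencil w t) ζ 0 := by
  induction l generalizing ξ with
  | nil => exact ⟨ξ, fun _ _ => rfl, fun i hi => absurd hi List.not_mem_nil, hpos⟩
  | cons i l ih =>
    obtain ⟨hil, hl⟩ := List.nodup_cons.1 hl
    have hv (i : ι) : 0 ≤ x i * (1 - x i) := mul_nonneg (hx i).1 (sub_nonneg.2 (hx i).2)
    obtain ⟨ξ', hξ', hξ'i, hpos'⟩ : ∃ ξ' : ι → ℝ, (∀ j ≠ i, ξ' j = ξ j) ∧
        (ξ' i = ξ i - x i ∨ ξ' i = ξ i - x i + 1) ∧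
        ∀ t : ℝ, α ≤ t → 0 < expectedPairing w (fun i => x i * (1 - x i)) l ξ' t 0 := by
      have hsplit := expectedPairing_pos_of_varianceOp_pos w hv l (ξ - Pi.single i (x i)) i (hx i)
        fun t ht => by
          rw [sub_add_cancel]
          exact (hpos t ht).trans_eq (congrFun (expectedPairing_cons w _ i l ξ t) 0)
      rcases hsplit with h | h
      · exact ⟨_, fun j hj => by simp [hj], .inr (by simp), h⟩
      · exact ⟨_, fun j hj => by simp [hj], .inl (by simp), h⟩
    obtain ⟨ζ, hζ, hζl, hζpos⟩ := ih hl hpos'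
    refine ⟨ζ, fun j hj => ?_, fun j hj => ?_, hζpos⟩
    · rw [hζ j (List.not_mem_of_not_mem_cons hj), hξ' j (List.ne_of_not_mem_cons hj)]
    · rcases List.mem_cons.1 hj with rfl | hjl
      · rwa [hζ j hil]
      · rw [← hξ' j (ne_of_mem_of_not_mem hjl hil)]
        exact hζl j hjl

end Interlacing

section Quadratic

variable {ι N : Type*} [Fintype ι]

theorem posSemidef_weightedGram [Finite N] (b : ι → N → ℝ) {x : ι → ℝ} (hx : ∀ i, 0 ≤ x i) :
    (weightedGram b x).PosSemidef :=
  posSemidef_sum _ fun i _ => (posSemidef_vecMulVec_self_star (b i)).smul (hx i)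

variable [Fintype N]

theorem dotProduct_weightedGram_mulVec_self (b : ι → N → ℝ) (z : ι → ℝ) (y : N → ℝ) :
    y ⬝ᵥ weightedGram b z *ᵥ y = ∑ i, z i * (b i ⬝ᵥ y) ^ 2 := by
  rw [dotProduct_weightedGram_mulVec]
  simp only [dotProduct_comm y, ← sq]

theorem posSemidef_sub_iff {A B : Matrix N N ℝ} (hA : A.IsHermitian) (hB : B.IsHermitian) :
    (A - B).PosSemidef ↔ ∀ y, y ⬝ᵥ B *ᵥ y ≤ y ⬝ᵥ A *ᵥ y := by
  rw [posSemidef_iff_dotProduct_mulVec]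
  simp only [hA.sub hB, true_and, star_trivial, sub_mulVec, dotProduct_sub, sub_nonneg]

end Quadratic

section Rounding

variable {ι N : Type*} [Fintype ι] [Fintype N]

theorem posSemidef_of_forall_det_ne_zero [DecidableEq N] {A : Matrix N N ℝ} (hA : A.IsHermitian)
    (h : ∀ t : ℝ, 0 ≤ t → (t • 1 + A).det ≠ 0) : A.PosSemidef := by
  refine hA.posSemidef_iff_eigenvalues_nonneg.2 fun i => ?_
  by_contra! hneg
  refine spectrum.mem_iff.1 (hA.eigenvalues_mem_spectrum_real i) ?_
  rw [← IsUnit.neg_iff, neg_sub, sub_eq_neg_add, Algebra.algebraMap_eq_smul_one, ← neg_smul,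
    isUnit_iff_isUnit_det, isUnit_iff_ne_zero]
  exact h _ (neg_nonneg.2 hneg.le)

theorem neg_mul_dotProduct_self_le_of_pencil_ne_zero [DecidableEq N] (w : ι → N → ℝ) {ζ : ι → ℝ}
    {α : ℝ} (h : ∀ t : ℝ, α ≤ t → pencil w t ζ ≠ 0) (y : N → ℝ) :
    -(α * (y ⬝ᵥ y)) ≤ ∑ i, ζ i * (w i ⬝ᵥ y) ^ 2 := by
  have hpsd : (α • 1 + weightedGram w ζ).PosSemidef := by
    refine posSemidef_of_forall_det_ne_zero
      (((isHermitian_one).smul (IsSelfAdjoint.all α)).add (isHermitian_weightedGram w ζ))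
      fun t ht => ?_
    rw [← add_assoc, ← add_smul]
    exact h _ (le_add_of_nonneg_left ht)
  have hy := hpsd.dotProduct_mulVec_nonneg y
  rw [star_trivial, add_mulVec, dotProduct_add, smul_mulVec, one_mulVec, dotProduct_smul,
    smul_eq_mul, dotProduct_weightedGram_mulVec_self] at hy
  linarith

theorem exists_rounding_of_sum_le (w : ι → N → ℝ) {x : ι → ℝ} (hx : ∀ i, x i ∈ Set.Icc (0 : ℝ) 1)
    {α : ℝ} (hα : 0 < α)
    (hvar : ∀ y, 8 * ∑ i, x i * (1 - x i) * (w i ⬝ᵥ w i) * (w i ⬝ᵥ y) ^ 2 ≤ α ^ 2 * (y ⬝ᵥ y)) :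
    ∃ z : ι → ℝ, (∀ i, z i = 0 ∨ z i = 1) ∧
      ∀ y, |∑ i, (z i - x i) * (w i ⬝ᵥ y) ^ 2| ≤ α * (y ⬝ᵥ y) := by
  classical
  obtain ⟨ζ, -, hζ, hpos⟩ := exists_rounding_expectedPairing_pos w hx
    (Finset.nodup_toList Finset.univ) fun t ht => expectedPairing_univ_pos hα ht
      (fun i => mul_nonneg (hx i).1 (sub_nonneg.2 (hx i).2)) hvar
  have hne {t : ℝ} (ht : α ≤ t) : pencil w t (-ζ) ≠ 0 ∧ pencil w t ζ ≠ 0 := by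
    have := (hpos t ht).ne'
    rwa [pairing, mul_ne_zero_iff, zero_sub, zero_add] at this
  refine ⟨ζ + x, fun i => ?_, fun y => abs_le.2 ⟨?_, ?_⟩⟩
  · refine (hζ i (Finset.mem_toList.2 (Finset.mem_univ i))).imp (fun h => ?_) fun h => ?_ <;>
      simp [h]
  · simpa using neg_mul_dotProduct_self_le_of_pencil_ne_zero w (fun t ht => (hne ht).2) y
  · have := neg_mul_dotProduct_self_le_of_pencil_ne_zero w (fun t ht => (hne ht).1) y
    simp only [Pi.neg_apply, neg_mul, Finset.sum_neg_distrib, neg_le_neg_iff] at this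
    simpa using this

end Rounding

section Metric

variable {ι N : Type*} [Fintype ι] [Fintype N] {w : ι → N → ℝ} {x r : ι → ℝ} {α : ℝ}
  {M : Matrix N N ℝ}

open scoped MatrixOrder in
theorem exists_rounding_of_posDef (hM : M.PosDef) (hx : ∀ i, x i ∈ Set.Icc (0 : ℝ) 1) (hα : 0 < α)
    (hr : ∀ i y, (w i ⬝ᵥ y) ^ 2 ≤ r i * (y ⬝ᵥ M *ᵥ y))
    (hvar : ∀ y, 8 * ∑ i, x i * (1 - x i) * r i * (w i ⬝ᵥ y) ^ 2 ≤ α ^ 2 * (y ⬝ᵥ M *ᵥ y)) :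
    ∃ z : ι → ℝ, (∀ i, z i = 0 ∨ z i = 1) ∧
      ∀ y, |∑ i, (z i - x i) * (w i ⬝ᵥ y) ^ 2| ≤ α * (y ⬝ᵥ M *ᵥ y) := by
  classical
  obtain ⟨_, ⟨B, rfl⟩, rfl⟩ := CStarAlgebra.isStrictlyPositive_iff_eq_star_mul_self.1
    hM.isStrictlyPositive
  have hquad (y : N → ℝ) : y ⬝ᵥ (star B.1 * B.1) *ᵥ y = (B.1 *ᵥ y) ⬝ᵥ (B.1 *ᵥ y) := by
    rw [← mulVec_mulVec, star_eq_conjTranspose, conjTranspose_eq_transpose_of_trivial,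
      dotProduct_mulVec, vecMul_transpose]
  have hcancel (y : N → ℝ) : B.1 *ᵥ (B⁻¹).1 *ᵥ y = y := by
    rw [mulVec_mulVec, Units.mul_inv, one_mulVec]
  simp only [hquad] at hr hvar ⊢
  let w' : ι → N → ℝ := fun i => w i ᵥ* (B⁻¹).1
  have hw' (i : ι) (y : N → ℝ) : w i ⬝ᵥ (B⁻¹).1 *ᵥ y = w' i ⬝ᵥ y := dotProduct_mulVec ..
  have hnorm (i : ι) (y : N → ℝ) :
      (w' i ⬝ᵥ w' i) * (w' i ⬝ᵥ y) ^ 2 ≤ r i * (w' i ⬝ᵥ y) ^ 2 := by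
    have h := hr i ((B⁻¹).1 *ᵥ w' i)
    rw [hcancel, hw', sq] at h
    rcases (dotProduct_self_star_nonneg (w' i)).eq_or_lt with h0 | h0
    · simp [dotProduct_self_eq_zero.1 h0.symm]
    · exact mul_le_mul_of_nonneg_right (le_of_mul_le_mul_right h h0) (sq_nonneg _)
  obtain ⟨z, hz, hzy⟩ := exists_rounding_of_sum_le w' hx hα fun y => by
    have h := hvar ((B⁻¹).1 *ᵥ y)
    simp only [hcancel, hw'] at h
    refine le_trans ?_ h
    simp only [mul_assoc]
    gcongr 8 * ∑ i, x i * ((1 - x i) * ?_) with i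
    · exact (hx i).1
    · exact sub_nonneg.2 (hx i).2
    · exact hnorm i y
  refine ⟨z, hz, fun y => ?_⟩
  have h := hzy (B.1 *ᵥ y)
  simpa only [← hw', mulVec_mulVec, Units.inv_mul, one_mulVec] using h

/- There are finitely many candidates `z`, so one of them works for `M + η` with `η` arbitrarily
small. -/
theorem exists_rounding_of_posSemidef (hM : M.PosSemidef) (hx : ∀ i, x i ∈ Set.Icc (0 : ℝ) 1)
    (hα : 0 < α) (hr₀ : ∀ i, 0 ≤ r i) (hr : ∀ i y, (w i ⬝ᵥ y) ^ 2 ≤ r i * (y ⬝ᵥ M *ᵥ y))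
    (hvar : ∀ y, 8 * ∑ i, x i * (1 - x i) * r i * (w i ⬝ᵥ y) ^ 2 ≤ α ^ 2 * (y ⬝ᵥ M *ᵥ y)) :
    ∃ z : ι → ℝ, (∀ i, z i = 0 ∨ z i = 1) ∧
      ∀ y, |∑ i, (z i - x i) * (w i ⬝ᵥ y) ^ 2| ≤ α * (y ⬝ᵥ M *ᵥ y) := by
  classical
  have hquad (η : ℝ) (y : N → ℝ) :
      y ⬝ᵥ (M + η • (1 : Matrix N N ℝ)) *ᵥ y = y ⬝ᵥ M *ᵥ y + η * (y ⬝ᵥ y) := by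
    rw [add_mulVec, dotProduct_add, smul_mulVec, one_mulVec, dotProduct_smul, smul_eq_mul]
  have hfinite : {z : ι → ℝ | ∀ i, z i = 0 ∨ z i = 1}.Finite := by
    convert Set.Finite.pi' fun _ : ι => Set.toFinite ({0, 1} : Set ℝ)
    simp
  by_contra! hfail
  have hsmall : ∀ᶠ η in nhdsWithin (0 : ℝ) (Set.Ioi 0), ∀ z ∈ {z : ι → ℝ | ∀ i, z i = 0 ∨ z i = 1},
      ∃ y, α * (y ⬝ᵥ (M + η • (1 : Matrix N N ℝ)) *ᵥ y) < |∑ i, (z i - x i) * (w i ⬝ᵥ y) ^ 2| := by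
    refine (Filter.eventually_all_finite hfinite).2 fun z hz => ?_
    obtain ⟨y, hy⟩ := hfail z hz
    have hcont : Continuous fun η : ℝ => α * (y ⬝ᵥ (M + η • (1 : Matrix N N ℝ)) *ᵥ y) := by
      simp only [hquad]
      fun_prop
    refine Filter.Eventually.mono ?_ fun η hη => ⟨y, hη⟩
    exact (hcont.tendsto' 0 _ (by simp)).mono_left nhdsWithin_le_nhds |>.eventually_lt_const hy
  obtain ⟨η, hη, hη₀ : 0 < η⟩ := (hsmall.and self_mem_nhdsWithin).exists
  have hle (y : N → ℝ) : y ⬝ᵥ M *ᵥ y ≤ y ⬝ᵥ (M + η • (1 : Matrix N N ℝ)) *ᵥ y := by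
    rw [hquad]
    exact le_add_of_nonneg_right (mul_nonneg hη₀.le (dotProduct_self_star_nonneg y))
  obtain ⟨z, hz, hzy⟩ := exists_rounding_of_posDef
    (PosDef.posSemidef_add hM (PosDef.one.smul hη₀)) hx hα
    (fun i y => (hr i y).trans (mul_le_mul_of_nonneg_left (hle y) (hr₀ i)))
    fun y => (hvar y).trans (mul_le_mul_of_nonneg_left (hle y) (sq_nonneg α))
  obtain ⟨y, hy⟩ := hη z hz
  exact absurd (hzy y) hy.not_ge

end Metric

section CostLift

variable {ι N : Type*} [Fintype N]

/-- The vectors `(bᵢ, √cᵢ)`, whose additional coordinate records the costs `cᵢ`. -/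
noncomputable def costLift (b : ι → N → ℝ) (c : ι → ℝ) (i : ι) : N ⊕ Unit → ℝ :=
  Sum.elim (b i) fun _ => √(c i)

theorem costLift_dotProduct (b : ι → N → ℝ) (c : ι → ℝ) (i : ι) (y : N ⊕ Unit → ℝ) :
    costLift b c i ⬝ᵥ y = b i ⬝ᵥ (y ∘ Sum.inl) + √(c i) * y (Sum.inr ()) := by
  simp [costLift, dotProduct]

theorem costLift_dotProduct_sq_le (b : ι → N → ℝ) {c : ι → ℝ} (hc : ∀ i, 0 ≤ c i) (i : ι)
    (y : N ⊕ Unit → ℝ) :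
    (costLift b c i ⬝ᵥ y) ^ 2 ≤ 2 * ((b i ⬝ᵥ (y ∘ Sum.inl)) ^ 2 + c i * y (Sum.inr ()) ^ 2) := by
  rw [costLift_dotProduct]
  refine add_sq_le.trans_eq ?_
  rw [mul_pow, Real.sq_sqrt (hc i)]

end CostLift

section CostGram

variable {ι N : Type*} [Fintype ι]

/-- The matrix `∑ xᵢ bᵢ bᵢᵀ` together with one further diagonal entry, the total cost `⟨c, x⟩`. -/
noncomputable def costGram (b : ι → N → ℝ) (c x : ι → ℝ) : Matrix (N ⊕ Unit) (N ⊕ Unit) ℝ :=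
  weightedGram (costLift b 0) x + weightedGram (costLift 0 c) x

theorem posSemidef_costGram [Finite N] (b : ι → N → ℝ) (c : ι → ℝ) {x : ι → ℝ} (hx : ∀ i, 0 ≤ x i) :
    (costGram b c x).PosSemidef :=
  (posSemidef_weightedGram _ hx).add (posSemidef_weightedGram _ hx)

variable [Fintype N]

theorem dotProduct_costGram_mulVec_self (b : ι → N → ℝ) {c : ι → ℝ} (hc : ∀ i, 0 ≤ c i)
    (x : ι → ℝ) (y : N ⊕ Unit → ℝ) :
    y ⬝ᵥ costGram b c x *ᵥ y =
      ∑ i, x i * ((b i ⬝ᵥ (y ∘ Sum.inl)) ^ 2 + c i * y (Sum.inr ()) ^ 2) := by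
  rw [costGram, add_mulVec, dotProduct_add, dotProduct_weightedGram_mulVec_self,
    dotProduct_weightedGram_mulVec_self, ← Finset.sum_add_distrib]
  simp [costLift_dotProduct, mul_pow, Real.sq_sqrt (hc _), mul_add]

variable {b : ι → N → ℝ} {x c : ι → ℝ} {ε α : ℝ}

theorem costLift_dotProduct_sq_le_costGram (hc : ∀ i, 0 ≤ c i)
    (hb : ∀ i u, (b i ⬝ᵥ u) ^ 2 ≤ ε ^ 2 * ∑ j, x j * (b j ⬝ᵥ u) ^ 2)
    (hcx : ∀ i, c i ≤ ε ^ 2 * ∑ j, x j * c j) (i : ι) (y : N ⊕ Unit → ℝ) :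
    (costLift b c i ⬝ᵥ y) ^ 2 ≤ 2 * ε ^ 2 * (y ⬝ᵥ costGram b c x *ᵥ y) := by
  calc (costLift b c i ⬝ᵥ y) ^ 2
      ≤ 2 * ((b i ⬝ᵥ (y ∘ Sum.inl)) ^ 2 + c i * y (Sum.inr ()) ^ 2) :=
        costLift_dotProduct_sq_le b hc i y
    _ ≤ 2 * (ε ^ 2 * ∑ j, x j * (b j ⬝ᵥ (y ∘ Sum.inl)) ^ 2
          + (ε ^ 2 * ∑ j, x j * c j) * y (Sum.inr ()) ^ 2) := by
        gcongr
        · exact hb i _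
        · exact hcx i
    _ = 2 * ε ^ 2 * (y ⬝ᵥ costGram b c x *ᵥ y) := by
        rw [dotProduct_costGram_mulVec_self b hc]
        simp only [mul_add, ← mul_assoc, Finset.sum_add_distrib, ← Finset.sum_mul]

theorem sum_mul_costLift_dotProduct_sq_le (hεα : 32 * ε ^ 2 ≤ α ^ 2)
    (hx : ∀ i, x i ∈ Set.Icc (0 : ℝ) 1) (hc : ∀ i, 0 ≤ c i) (y : N ⊕ Unit → ℝ) :
    8 * ∑ i, x i * (1 - x i) * (2 * ε ^ 2) * (costLift b c i ⬝ᵥ y) ^ 2 ≤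
      α ^ 2 * (y ⬝ᵥ costGram b c x *ᵥ y) := by
  have hx₀ (i : ι) : 0 ≤ x i := (hx i).1
  calc 8 * ∑ i, x i * (1 - x i) * (2 * ε ^ 2) * (costLift b c i ⬝ᵥ y) ^ 2
      ≤ 8 * ∑ i, x i * 1 * (2 * ε ^ 2) *
          (2 * ((b i ⬝ᵥ (y ∘ Sum.inl)) ^ 2 + c i * y (Sum.inr ()) ^ 2)) := by
        gcongr with i
        · exact mul_nonneg (mul_nonneg (hx₀ i) zero_le_one) (by positivity)
        · exact hx₀ i
        · exact sub_le_self 1 (hx₀ i)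
        · exact costLift_dotProduct_sq_le b hc i y
    _ = 32 * ε ^ 2 * (y ⬝ᵥ costGram b c x *ᵥ y) := by
        rw [dotProduct_costGram_mulVec_self b hc, Finset.mul_sum, Finset.mul_sum]
        exact Finset.sum_congr rfl fun i _ => by ring
    _ ≤ α ^ 2 * (y ⬝ᵥ costGram b c x *ᵥ y) := by
        gcongr
        exact (posSemidef_costGram b c hx₀).dotProduct_mulVec_nonneg y

theorem exists_rounding_gram_and_cost (hα : 0 < α) (hεα : 32 * ε ^ 2 ≤ α ^ 2)
    (hx : ∀ i, x i ∈ Set.Icc (0 : ℝ) 1) (hc : ∀ i, 0 ≤ c i)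
    (hb : ∀ i u, (b i ⬝ᵥ u) ^ 2 ≤ ε ^ 2 * ∑ j, x j * (b j ⬝ᵥ u) ^ 2)
    (hcx : ∀ i, c i ≤ ε ^ 2 * ∑ j, x j * c j) :
    ∃ z : ι → ℝ, (∀ i, z i = 0 ∨ z i = 1) ∧
      (∀ u, |∑ i, (z i - x i) * (b i ⬝ᵥ u) ^ 2| ≤ α * ∑ i, x i * (b i ⬝ᵥ u) ^ 2) ∧
      |∑ i, (z i - x i) * c i| ≤ α * ∑ i, x i * c i := by
  obtain ⟨z, hz, hzy⟩ := exists_rounding_of_posSemidef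
    (posSemidef_costGram b c fun i => (hx i).1) hx hα (fun _ => by positivity)
    (costLift_dotProduct_sq_le_costGram hc hb hcx) (sum_mul_costLift_dotProduct_sq_le hεα hx hc)
  simp only [dotProduct_costGram_mulVec_self b hc, costLift_dotProduct] at hzy
  refine ⟨z, hz, fun u => ?_, ?_⟩
  · simpa using hzy (Sum.elim u 0)
  · simpa [Real.sq_sqrt (hc _)] using hzy (Sum.elim 0 1)

end CostGram

end SpectralRounding

open SpectralRounding in
theorem network_design_two_sided_rounding_general {ι N : Type*} [Fintype ι] [Finite N]
    (b : ι → N → ℝ) (x c : ι → ℝ) {ε α : ℝ} (hα : 0 < α) (hεα : 32 * ε ^ 2 ≤ α ^ 2)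
    (hx : ∀ e, 0 ≤ x e ∧ x e ≤ 1) (hc : ∀ e, 0 ≤ c e)
    (hreff : ∀ e, (ε ^ 2 • (∑ e', x e' • vecMulVec (b e') (b e')) -
      vecMulVec (b e) (b e)).PosSemidef)
    (hcinf : ∀ e, c e ≤ ε ^ 2 * ∑ e', c e' * x e') :
    ∃ z : ι → ℝ, (∀ e, z e = 0 ∨ z e = 1) ∧
      ((∑ e, z e • vecMulVec (b e) (b e)) -
        (1 - α) • ∑ e, x e • vecMulVec (b e) (b e)).PosSemidef ∧
      ((1 + α) • (∑ e, x e • vecMulVec (b e) (b e)) -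
        ∑ e, z e • vecMulVec (b e) (b e)).PosSemidef ∧
      (1 - α) * (∑ e, c e * x e) ≤ (∑ e, c e * z e) ∧
      (∑ e, c e * z e) ≤ (1 + α) * (∑ e, c e * x e) := by
  have := Fintype.ofFinite N
  have hherm (s : ℝ) (z : ι → ℝ) : (s • weightedGram b z).IsHermitian :=
    (isHermitian_weightedGram b z).smul (IsSelfAdjoint.all s)
  have hquad := dotProduct_weightedGram_mulVec_self b
  have hb (e : ι) (u : N → ℝ) : (b e ⬝ᵥ u) ^ 2 ≤ ε ^ 2 * ∑ e', x e' * (b e' ⬝ᵥ u) ^ 2 := by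
    have h := (posSemidef_sub_iff (hherm _ x) (posSemidef_vecMulVec_self_star (b e)).isHermitian).1
      (hreff e) u
    rwa [smul_mulVec, dotProduct_smul, hquad, vecMulVec_mulVec, op_smul_eq_smul, dotProduct_smul,
      smul_eq_mul, smul_eq_mul, dotProduct_comm u, star_trivial, ← sq] at h
  simp only [mul_comm (c _)] at hcinf ⊢
  obtain ⟨z, hz, hzb, hzc⟩ := exists_rounding_gram_and_cost hα hεα hx hc hb hcinf
  have hgram (u : N → ℝ) := abs_le.1 (hzb u)
  have hcost := abs_le.1 hzc
  simp only [sub_mul, Finset.sum_sub_distrib] at hgram hcost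
  refine ⟨z, hz, (posSemidef_sub_iff (isHermitian_weightedGram b z) (hherm _ x)).2 fun u => ?_,
    (posSemidef_sub_iff (hherm _ x) (isHermitian_weightedGram b z)).2 fun u => ?_, ?_, ?_⟩
  · rw [smul_mulVec, dotProduct_smul, smul_eq_mul, hquad, hquad]
    linarith [(hgram u).1]
  · rw [smul_mulVec, dotProduct_smul, smul_eq_mul, hquad, hquad]
    linarith [(hgram u).2]
  · linarith [hcost.1]
  · linarith [hcost.2]

/-- **Two-sided spectral rounding for graph Laplacians (network design version).**
Let `G` be a graph on `n` vertices whose edges are given by an edge list `E : Fin m → V × V`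
with `b_e := χ_u - χ_v` and Laplacian `L_y := ∑ y_e b_e b_eᵀ`. Suppose the support of the
fractional solution `x ∈ [0,1]^E` is connected (rank of `L_x` is `n - 1`), that
`b_e b_eᵀ ⪯ ε² L_x` for every edge (effective resistance at most `ε²`), and that
`c_∞ ≤ ε² ⟨c, x⟩`, where `ε ∈ (0, 1/8)`. Then there exists `z ∈ {0,1}^E` with
`(1 - 8ε) L_x ⪯ L_z ⪯ (1 + 8ε) L_x` and `(1 - 8ε) ⟨c, x⟩ ≤ ⟨c, z⟩ ≤ (1 + 8ε) ⟨c, x⟩`. -/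
theorem network_design_two_sided_rounding {n m : ℕ} (E : Fin m → Fin n × Fin n)
    (hE : ∀ e, (E e).1 ≠ (E e).2)
    (b : Fin m → Fin n → ℝ)
    (hb : b = fun e w => (if w = (E e).1 then (1 : ℝ) else 0) - (if w = (E e).2 then 1 else 0))
    (x c : Fin m → ℝ) (ε : ℝ)
    (hx : ∀ e, 0 ≤ x e ∧ x e ≤ 1) (hc : ∀ e, 0 ≤ c e)
    (hε0 : 0 < ε) (hε1 : ε < 1/8)
    (hconn : (∑ e, x e • vecMulVec (b e) (b e)).rank = n - 1)
    (hreff : ∀ e, (ε^2 • (∑ e', x e' • vecMulVec (b e') (b e')) -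
      vecMulVec (b e) (b e)).PosSemidef)
    (hcinf : ∀ e, c e ≤ ε^2 * ∑ e', c e' * x e') :
    ∃ z : Fin m → ℝ, (∀ e, z e = 0 ∨ z e = 1) ∧
      ((∑ e, z e • vecMulVec (b e) (b e)) -
        (1 - 8*ε) • ∑ e, x e • vecMulVec (b e) (b e)).PosSemidef ∧
      ((1 + 8*ε) • (∑ e, x e • vecMulVec (b e) (b e)) -
        ∑ e, z e • vecMulVec (b e) (b e)).PosSemidef ∧
      (1 - 8*ε) * (∑ e, c e * x e) ≤ (∑ e, c e * z e) ∧
      (∑ e, c e * z e) ≤ (1 + 8*ε) * (∑ e, c e * x e) := by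
  exact network_design_two_sided_rounding_general b x c (by positivity) (by nlinarith) hx hc hreff
    hcinf
end

section
/- Let G = (V, E) be a simple graph with n vertices, m edges, and maximum degree d. Let ε ∈ (0, 1], suppose m ≥ n/ε², and set m̃ := n/ε² (a real number). Then there exists a subset of edges F ⊆ E with |F| ≤ 8n/ε² such that −8√2·ε·d·I_n ⪯ L_G − (m/m̃)·Σ_{e ∈ F} b_e b_eᵀ ⪯ 8√2·ε·d·I_n. (Existence of a linear-sized additive unweighted spectral sparsifier.) -/
open Matrix BigOperators

open fwdDiff
open scoped MatrixOrder ComplexOrder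

/-!
The edges are sampled with probability `s = m̃ / m`, and a good outcome is found by the method of
interlacing polynomials. On symmetric matrices `f X = det X` is real stable and affine along every
matrix `w wᵀ`. Let `D` be a direction `w wᵀ` of the first factor of `f X * f X'` and `E` the same
direction of the second one. Choosing an edge shifts the product by `(1 - s) (D - E)`, omitting it
shifts it by `-s (D - E)`, and the average of the two is the operator `1 - s (1 - s) ∂_D ∂_E`. This
operator preserves stability, so a point above the roots of the average stays above the roots of one
of the two outcomes; deciding the edges one by one gives the set `F`. Since both factors end up
nonsingular above their respective points, the discrepancy `∑_{e ∈ F} b_e b_eᵀ - s L_G` is bounded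
from both sides.

The roots of the average over all edges are controlled by the barrier argument of Marcus, Spielman
and Srivastava: starting at `α I`, each operator `1 - s (1 - s) ∂_D ∂_E` costs a shift by a multiple
of `D + E`, so the total cost is a multiple of `L_G ⪯ 2 d I`.

The bound on `|F|` comes from one additional coordinate, common to all vectors `b_e`, whose diagonal
entry in the discrepancy matrix is proportional to `|F| - s m`.
-/

/-! ### Affine functions and mixed second differences -/

section Directions

variable {R V : Type*} [CommRing R] [AddCommGroup V]

lemma fwdDiff_comm (f : V → R) (D E : V) : Δ_[D] (Δ_[E] f) = Δ_[E] (Δ_[D] f) := by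
  ext X
  simp only [fwdDiff, add_right_comm X D E]
  ring

/-- The operator `1 - c ∂_D ∂_E`, for functions that are affine along `D` and `E`. -/
def mixedOp (c : R) (D E : V) (f : V → R) : V → R := f - c • Δ_[D] (Δ_[E] f)

/-- The composition of the operators `1 - c ∂_D ∂_E` over the pairs `(D, E)` of a list. -/
def mixedPoly (c : R) (f : V → R) : List (V × V) → V → R
  | [] => f
  | p :: L => mixedOp c p.1 p.2 (mixedPoly c f L)

lemma mixedOp_apply (c : R) (D E : V) (f : V → R) (X : V) :
    mixedOp c D E f X = f X - c * Δ_[D] (Δ_[E] f) X := rfl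

lemma fwdDiff_mixedOp (c : R) (D E W : V) (f : V → R) :
    Δ_[W] (mixedOp c D E f) = mixedOp c D E (Δ_[W] f) := by
  rw [mixedOp, mixedOp, fwdDiff_comm f E W, fwdDiff_comm _ D W]
  ext X
  simp only [fwdDiff, Pi.sub_apply, Pi.smul_apply, smul_eq_mul]
  ring

variable [Module R V] {f : V → R} {D E : V}

/-- The function `f` is affine along the direction `D`, so that the forward difference `Δ_[D] f` is
its derivative in that direction. -/
def AffineAlong (f : V → R) (D : V) : Prop :=
  ∀ X, ∀ t : R, f (X + t • D) = f X + t * Δ_[D] f X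

namespace AffineAlong

protected lemma fwdDiff (h : AffineAlong f D) (E : V) : AffineAlong (Δ_[E] f) D := by
  intro X t
  simp only [fwdDiff, add_right_comm X (t • D) E, add_right_comm X D E, h _ t]
  ring

protected lemma sub_smul {g : V → R} (hf : AffineAlong f D) (hg : AffineAlong g D) (c : R) :
    AffineAlong (f - c • g) D := by
  intro X t
  simp only [fwdDiff, Pi.sub_apply, Pi.smul_apply, smul_eq_mul, hf _ t, hg _ t]
  ring

lemma fwdDiff_add_smul (h : AffineAlong f D) (X : V) (t : R) :
    Δ_[D] f (X + t • D) = Δ_[D] f X := by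
  have e : X + t • D + D = X + (t + 1) • D := by rw [add_smul, one_smul, add_assoc]
  rw [fwdDiff, e, h, h]
  ring

lemma apply_add_smul_add_smul (hD : AffineAlong f D) (hE : AffineAlong f E) (X : V) (y z : R) :
    f (X + y • D + z • E) =
      f X + y * Δ_[D] f X + z * Δ_[E] f X + y * z * Δ_[D] (Δ_[E] f) X := by
  rw [hE, hD, hD.fwdDiff E]
  ring

lemma fwdDiff_fwdDiff_add_smul_add_smul (hD : AffineAlong f D) (hE : AffineAlong f E) (X : V)
    (y z : R) : Δ_[D] (Δ_[E] f) (X + y • D + z • E) = Δ_[D] (Δ_[E] f) X := by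
  rw [fwdDiff_comm, (hE.fwdDiff D).fwdDiff_add_smul, fwdDiff_comm, (hD.fwdDiff E).fwdDiff_add_smul]

protected lemma mixedOp {W : V} (h : AffineAlong f W) (c : R) (D E : V) :
    AffineAlong (mixedOp c D E f) W :=
  h.sub_smul ((h.fwdDiff E).fwdDiff D) c

lemma prod_inl {V' : Type*} [AddCommGroup V'] [Module R V'] (h : AffineAlong f D) (g : V' → R) :
    AffineAlong (fun Z : V × V' => f Z.1 * g Z.2) (D, 0) := by
  intro Z t
  simp only [fwdDiff, Prod.fst_add, Prod.snd_add, Prod.smul_fst, Prod.smul_snd, smul_zero,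
    add_zero, h Z.1 t]
  ring

lemma prod_inr {V' : Type*} [AddCommGroup V'] [Module R V'] (h : AffineAlong f D) (g : V' → R) :
    AffineAlong (fun Z : V' × V => g Z.1 * f Z.2) (0, D) := by
  intro Z t
  simp only [fwdDiff, Prod.fst_add, Prod.snd_add, Prod.smul_fst, Prod.smul_snd, smul_zero,
    add_zero, h Z.2 t]
  ring

end AffineAlong

end Directions

/-! ### Rayleigh functions and the barrier step -/

section Rayleigh

variable {V : Type*} [AddCommGroup V] [Module ℝ V] {S : Set V} {f : V → ℝ} {X P D E W : V}

/-- The function `f` is affine along every direction of `S` and satisfies the Rayleigh inequality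
`f * ∂_D ∂_E f ≤ ∂_D f * ∂_E f` everywhere, for all `D, E ∈ S`. -/
structure Rayleigh (S : Set V) (f : V → ℝ) : Prop where
  affineAlong : ∀ D ∈ S, AffineAlong f D
  mul_fwdDiff_fwdDiff_le : ∀ D ∈ S, ∀ E ∈ S, ∀ X,
    f X * Δ_[D] (Δ_[E] f) X ≤ Δ_[D] f X * Δ_[E] f X

/-- The point `X` lies above the roots of `f`: `f` is positive on the translate to `X` of the convex
cone generated by `S`. -/
def AboveRoots (S : Set V) (f : V → ℝ) (X : V) : Prop :=
  ∀ P ∈ PointedCone.hull ℝ S, 0 < f (X + P)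

lemma smul_mem_hull (hD : D ∈ S) {t : ℝ} (ht : 0 ≤ t) : t • D ∈ PointedCone.hull ℝ S :=
  PointedCone.smul_mem _ ht (PointedCone.subset_hull hD)

@[elab_as_elim]
lemma hull_induction {p : ∀ P, P ∈ PointedCone.hull ℝ S → Prop} (zero : p 0 (zero_mem _))
    (add : ∀ P Q hP hQ, p P hP → p Q hQ → p (P + Q) (add_mem hP hQ))
    (smul : ∀ D (hD : D ∈ S) (t : ℝ) (ht : 0 ≤ t), p (t • D) (smul_mem_hull hD ht))
    (hP : P ∈ PointedCone.hull ℝ S) : p P hP :=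
  Submodule.closure_induction zero add (fun r D hD => smul D hD r r.2) hP

lemma nonneg_of_forall_nonneg_add_mul_nonneg {a b : ℝ} (h : ∀ t : ℝ, 0 ≤ t → 0 ≤ a + t * b) :
    0 ≤ b := by
  by_contra! hb
  have h1 := h ((|a| + 1) / -b) (div_nonneg (by positivity) (by linarith))
  have h2 : (|a| + 1) / -b * b = -(|a| + 1) := by rw [div_neg, neg_mul, div_mul_cancel₀ _ hb.ne]
  linarith [le_abs_self a]

namespace AboveRoots

lemma pos (h : AboveRoots S f X) : 0 < f X := by
  simpa using h 0 (zero_mem _)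

protected lemma add (h : AboveRoots S f X) (hP : P ∈ PointedCone.hull ℝ S) :
    AboveRoots S f (X + P) := by
  intro Q hQ
  rw [add_assoc]
  exact h _ (add_mem hP hQ)

lemma fwdDiff_nonneg (hf : Rayleigh S f) (h : AboveRoots S f X) (hD : D ∈ S) :
    0 ≤ Δ_[D] f X := by
  refine nonneg_of_forall_nonneg_add_mul_nonneg (a := f X) fun t ht => ?_
  rw [← hf.affineAlong D hD]
  exact (h _ (smul_mem_hull hD ht)).le

lemma fwdDiff_fwdDiff_nonneg (hf : Rayleigh S f) (h : AboveRoots S f X) (hD : D ∈ S)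
    (hE : E ∈ S) : 0 ≤ Δ_[D] (Δ_[E] f) X := by
  refine nonneg_of_forall_nonneg_add_mul_nonneg (a := Δ_[E] f X) fun t ht => ?_
  rw [← (hf.affineAlong D hD).fwdDiff E]
  exact (h.add (smul_mem_hull hD ht)).fwdDiff_nonneg hf hE

/-- For `E ∈ S` the Rayleigh inequality says that `∂_E (∂_D f / f) ≤ 0`. -/
lemma fwdDiff_div_antitone (hf : Rayleigh S f) (hD : D ∈ S) (hP : P ∈ PointedCone.hull ℝ S) :
    ∀ X, AboveRoots S f X → Δ_[D] f (X + P) / f (X + P) ≤ Δ_[D] f X / f X := by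
  induction hP using hull_induction with
  | zero => simp
  | add P Q hP _ ihP ihQ =>
    intro X h
    rw [← add_assoc]
    exact (ihQ _ (h.add hP)).trans (ihP X h)
  | smul E hE t ht =>
    intro X h
    rw [div_le_div_iff₀ (h.add (smul_mem_hull hE ht)).pos h.pos, hf.affineAlong E hE,
      (hf.affineAlong E hE).fwdDiff D]
    linarith [mul_le_mul_of_nonneg_left (hf.mul_fwdDiff_fwdDiff_le E hE D hD X) ht]

/-- Moving down along a direction of `S` stays above the roots as long as `f` itself is positive,
because further up the cone the relative decrease of `f` is smaller. -/
protected lemma sub_smul (hf : Rayleigh S f) (h : AboveRoots S f X) (hD : D ∈ S) {t : ℝ}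
    (ht : 0 ≤ t) (hpos : 0 < f (X - t • D)) : AboveRoots S f (X - t • D) := by
  intro P hP
  have hXP := h P hP
  have hratio := (div_le_div_iff₀ hXP h.pos).1 (fwdDiff_div_antitone hf hD hP X h)
  have hdown : ∀ Y, f (Y - t • D) = f Y - t * Δ_[D] f Y := fun Y => by
    rw [sub_eq_add_neg, ← neg_smul, hf.affineAlong D hD, neg_mul, sub_eq_add_neg]
  rw [sub_add_eq_add_sub, hdown]
  rw [hdown] at hpos
  refine pos_of_mul_pos_right (a := f X) ?_ h.pos.le
  nlinarith [mul_pos hpos hXP, mul_le_mul_of_nonneg_left hratio ht]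

lemma fwdDiff_fwdDiff_nonneg_of_forall_mem_Ioc (hf : Rayleigh S f) (hD : D ∈ S) (hE : E ∈ S)
    (hW : W ∈ S) {t₀ r : ℝ} (ht₀r : t₀ < r)
    (h : ∀ t ∈ Set.Ioc t₀ r, AboveRoots S f (X + t • W)) :
    0 ≤ Δ_[D] (Δ_[E] f) (X + t₀ • W) := by
  have hclosed : IsClosed {t : ℝ | 0 ≤ Δ_[D] (Δ_[E] f) (X + t • W)} := by
    simp only [(((hf.affineAlong W hW).fwdDiff E).fwdDiff D) X]
    exact isClosed_le (by fun_prop) (by fun_prop)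
  have hsub := hclosed.closure_subset_iff.2 fun t ht =>
    (h t ht).fwdDiff_fwdDiff_nonneg hf hD hE
  rw [closure_Ioc ht₀r.ne] at hsub
  exact hsub (Set.left_mem_Icc.2 ht₀r.le)

/-- Descending from a point above the roots of `f`, at the first zero of `f` the value of
`f - c ∂_D ∂_E f` would be `-c ∂_D ∂_E f ≤ 0`. -/
lemma of_mixedOp_smul (hf : Rayleigh S f) {c : ℝ} (hc : 0 ≤ c) (hD : D ∈ S) (hE : E ∈ S)
    (hW : W ∈ S) {r : ℝ} (hr : 0 ≤ r) (h' : AboveRoots S (mixedOp c D E f) X)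
    (h : AboveRoots S f (X + r • W)) : AboveRoots S f X := by
  have haff := hf.affineAlong W hW
  suffices hpos : 0 < f X by simpa [hpos] using h.sub_smul hf hW hr
  by_contra! hle
  have hslope : 0 < Δ_[W] f X := by
    have := h.pos
    rw [haff] at this
    exact pos_of_mul_pos_right (by linarith) hr
  obtain ⟨t₀, hroot⟩ : ∃ t₀, f X + t₀ * Δ_[W] f X = 0 := ⟨-f X / Δ_[W] f X, by field_simp; ring⟩
  have ht₀ : 0 ≤ t₀ := nonneg_of_mul_nonneg_left (by linarith) hslope
  have hzero : f (X + t₀ • W) = 0 := by rw [haff, hroot]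
  have ht₀r : t₀ < r := by
    have := h.pos
    rw [haff] at this
    exact lt_of_mul_lt_mul_right (by linarith) hslope.le
  have habove : ∀ t ∈ Set.Ioc t₀ r, AboveRoots S f (X + t • W) := by
    intro t ht
    have hdown : X + r • W - (r - t) • W = X + t • W := by rw [sub_smul]; abel
    have hpos : 0 < f (X + t • W) := by
      rw [haff]
      nlinarith [mul_lt_mul_of_pos_right ht.1 hslope]
    rw [← hdown] at hpos ⊢
    exact h.sub_smul hf hW (sub_nonneg.2 ht.2) hpos
  have hmixed := fwdDiff_fwdDiff_nonneg_of_forall_mem_Ioc hf hD hE hW ht₀r habove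
  have := h' _ (smul_mem_hull hW ht₀)
  rw [mixedOp_apply, hzero] at this
  linarith [mul_nonneg hc hmixed]

lemma of_mixedOp (hf : Rayleigh S f) {c : ℝ} (hc : 0 ≤ c) (hD : D ∈ S) (hE : E ∈ S)
    (hP : P ∈ PointedCone.hull ℝ S) :
    ∀ X, AboveRoots S (mixedOp c D E f) X → AboveRoots S f (X + P) → AboveRoots S f X := by
  induction hP using hull_induction with
  | zero => simp
  | add P Q hP _ ihP ihQ =>
    intro X h' h
    exact ihP X h' (ihQ _ (h'.add hP) (by rwa [add_assoc]))
  | smul W hW t ht => exact fun X => of_mixedOp_smul hf hc hD hE hW ht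

protected lemma mixedOp (hf : Rayleigh S f) (h : AboveRoots S f X) (hD : D ∈ S) (hE : E ∈ S)
    {c φ : ℝ} (hc : 0 ≤ c) (hcφ : c * φ ^ 2 ≤ 1) (hφ : Δ_[D] f X + Δ_[E] f X ≤ φ * f X) :
    AboveRoots S (mixedOp c D E f) X := by
  intro P hP
  have hXP := h P hP
  have hDP := (h.add hP).fwdDiff_nonneg hf hD
  have hEP := (h.add hP).fwdDiff_nonneg hf hE
  have hsum : Δ_[D] f (X + P) + Δ_[E] f (X + P) ≤ φ * f (X + P) := by
    rw [← div_le_iff₀ hXP, add_div]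
    refine (add_le_add (fwdDiff_div_antitone hf hD hP X h)
      (fwdDiff_div_antitone hf hE hP X h)).trans ?_
    rwa [← add_div, div_le_iff₀ h.pos]
  have hprod : f (X + P) * (c * Δ_[D] (Δ_[E] f) (X + P)) < f (X + P) * f (X + P) := by
    calc f (X + P) * (c * Δ_[D] (Δ_[E] f) (X + P))
        = c * (f (X + P) * Δ_[D] (Δ_[E] f) (X + P)) := by ring
      _ ≤ c * (Δ_[D] f (X + P) * Δ_[E] f (X + P)) :=
          mul_le_mul_of_nonneg_left (hf.mul_fwdDiff_fwdDiff_le D hD E hE _) hc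
      _ ≤ c * ((φ * f (X + P)) ^ 2 / 4) := by
          refine mul_le_mul_of_nonneg_left ?_ hc
          nlinarith [sq_nonneg (Δ_[D] f (X + P) - Δ_[E] f (X + P)),
            pow_le_pow_left₀ (add_nonneg hDP hEP) hsum 2]
      _ = c * φ ^ 2 * (f (X + P) * f (X + P)) / 4 := by ring
      _ < f (X + P) * f (X + P) := by nlinarith [mul_pos hXP hXP]
  exact sub_pos.2 (lt_of_mul_lt_mul_left hprod hXP.le)

/-- The operator `1 - s (1 - s) ∂_D ∂_E` averages the translates by `(1 - s) (D - E)` and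
`-s (D - E)` with weights `s` and `1 - s`, so one of the two translates is positive at `X`. -/
lemma add_smul_sub_or (hf : Rayleigh S f) (h : AboveRoots S f X) (hD : D ∈ S) (hE : E ∈ S)
    {s : ℝ} (hs₀ : 0 ≤ s) (hs₁ : s ≤ 1) (hpos : 0 < mixedOp (s * (1 - s)) D E f X) :
    AboveRoots S f (X + (1 - s) • (D - E)) ∨ AboveRoots S f (X + (-s) • (D - E)) := by
  have hval : ∀ t : ℝ, f (X + t • (D - E)) =
      f X + t * Δ_[D] f X - t * Δ_[E] f X - t ^ 2 * Δ_[D] (Δ_[E] f) X := fun t => by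
    rw [smul_sub, ← add_sub_assoc, sub_eq_add_neg, ← neg_smul,
      (hf.affineAlong D hD).apply_add_smul_add_smul (hf.affineAlong E hE)]
    ring
  by_cases hup : 0 < f (X + (1 - s) • (D - E))
  · left
    rw [smul_sub, ← add_sub_assoc] at hup ⊢
    exact (h.add (smul_mem_hull hD (sub_nonneg.2 hs₁))).sub_smul hf hE (sub_nonneg.2 hs₁) hup
  · right
    have hdown : 0 < f (X + (-s) • (D - E)) := by
      rw [hval] at hup ⊢
      rw [mixedOp_apply] at hpos
      by_contra! hle
      nlinarith [mul_nonneg hs₀ (not_lt.1 hup |> neg_nonneg.2),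
        mul_nonneg (sub_nonneg.2 hs₁) (neg_nonneg.2 hle)]
    have e : X + (-s) • (D - E) = X + s • E - s • D := by rw [neg_smul, smul_sub]; abel
    rw [e] at hdown ⊢
    exact (h.add (smul_mem_hull hE hs₀)).sub_smul hf hD hs₀ hdown

end AboveRoots

/-- Both sides are values of the affine function `x ↦ x * w₀ + (x ^ 2 - c) * w₁`, and the bound
`w₁ ≤ φ * w₀` is the nonnegativity of the Wronskian at `t = -1 / φ`. Here
`r₀ + r₁ * t + r₂ * t ^ 2` and `s₀ + s₁ * t + s₂ * t ^ 2` are two quadratics with nonnegative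
Wronskian. -/
lemma barrier_of_wronskian_nonneg {r₀ r₁ r₂ s₀ s₁ s₂ c φ : ℝ} (hr₀ : 0 < r₀) (hr₂ : 0 ≤ r₂)
    (hφ : 0 < φ) (hc : 0 ≤ c) (hcφ : c * φ ^ 2 ≤ 1) (hr₁ : r₁ ≤ φ * r₀)
    (hW : ∀ t : ℝ, 0 ≤ (r₁ + 2 * t * r₂) * (s₀ + t * s₁ + t ^ 2 * s₂) -
      (r₀ + t * r₁ + t ^ 2 * r₂) * (s₁ + 2 * t * s₂)) :
    (s₀ + c * φ * s₁ + ((c * φ) ^ 2 - c) * s₂) * r₀ ≤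
      (r₀ + c * φ * r₁ + ((c * φ) ^ 2 - c) * r₂) * s₀ := by
  set w₀ := r₁ * s₀ - r₀ * s₁ with hw₀
  set w₁ := r₂ * s₀ - r₀ * s₂ with hw₁
  have hw₀_nonneg : 0 ≤ w₀ := by simpa [hw₀] using hW 0
  suffices 0 ≤ c * φ * w₀ + ((c * φ) ^ 2 - c) * w₁ by
    rw [hw₀, hw₁] at this
    linarith
  rcases le_or_gt w₁ 0 with hneg | hpos
  · have : (c * φ) ^ 2 ≤ c := by nlinarith
    nlinarith [mul_nonneg (mul_nonneg hc hφ.le) hw₀_nonneg]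
  · have hw₁φ : w₁ ≤ φ * w₀ := by
      have hscaled : 0 ≤ φ * r₀ * (φ * w₀ - w₁) - (φ * r₀ - r₁) * w₁ - r₂ * w₀ := by
        refine (mul_nonneg (by positivity : 0 ≤ φ ^ 2 * r₀) (hW (-1 / φ))).trans_eq ?_
        rw [hw₀, hw₁]
        field_simp
        ring
      have : 0 ≤ φ * r₀ * (φ * w₀ - w₁) := by
        nlinarith [mul_nonneg hr₂ hw₀_nonneg, mul_nonneg (sub_nonneg.2 hr₁) hpos.le]
      exact sub_nonneg.1 (nonneg_of_mul_nonneg_right this (by positivity))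
    nlinarith [mul_le_mul_of_nonneg_left hw₁φ hc, mul_nonneg (sq_nonneg (c * φ)) hpos.le]

/-- The barrier step: the shift by `c φ (D + E)` compensates for the increase of the logarithmic
derivatives under `1 - c ∂_D ∂_E`. -/
lemma AboveRoots.fwdDiff_mixedOp_mul_le (hf : Rayleigh S f) (h : AboveRoots S f X) (hD : D ∈ S)
    (hE : E ∈ S) (hW : W ∈ S) {c φ : ℝ} (hc : 0 ≤ c) (hφ : 0 < φ) (hcφ : c * φ ^ 2 ≤ 1)
    (hX : Δ_[D] f X + Δ_[E] f X ≤ φ * f X) :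
    Δ_[W] (mixedOp c D E f) (X + (c * φ) • (D + E)) * f X ≤
      mixedOp c D E f (X + (c * φ) • (D + E)) * Δ_[W] f X := by
  have hfD := hf.affineAlong D hD
  have hfE := hf.affineAlong E hE
  have hderiv : ∀ g : V → ℝ, AffineAlong g D → AffineAlong g E → ∀ t : ℝ,
      Δ_[D] g (X + t • D + t • E) + Δ_[E] g (X + t • D + t • E) =
        Δ_[D] g X + Δ_[E] g X + 2 * t * Δ_[D] (Δ_[E] g) X := fun g hgD hgE t => by
    rw [(hgE.fwdDiff D), hgE.fwdDiff_add_smul, hgD.fwdDiff_add_smul, hgD.fwdDiff E,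
      fwdDiff_comm g E D, (hgD.fwdDiff E).fwdDiff_add_smul]
    ring
  have key := barrier_of_wronskian_nonneg (r₁ := Δ_[D] f X + Δ_[E] f X) (s₀ := Δ_[W] f X)
    (s₁ := Δ_[D] (Δ_[W] f) X + Δ_[E] (Δ_[W] f) X) (s₂ := Δ_[D] (Δ_[E] (Δ_[W] f)) X)
    h.pos (h.fwdDiff_fwdDiff_nonneg hf hD hE) hφ hc hcφ hX fun t => ?_
  · rw [fwdDiff_mixedOp, mixedOp_apply, mixedOp_apply, smul_add, ← add_assoc,
      hfD.apply_add_smul_add_smul hfE, hfD.fwdDiff_fwdDiff_add_smul_add_smul hfE,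
      (hfD.fwdDiff W).apply_add_smul_add_smul (hfE.fwdDiff W),
      (hfD.fwdDiff W).fwdDiff_fwdDiff_add_smul_add_smul (hfE.fwdDiff W)]
    linarith
  · have hDW := hf.mul_fwdDiff_fwdDiff_le D hD W hW (X + t • D + t • E)
    have hEW := hf.mul_fwdDiff_fwdDiff_le E hE W hW (X + t • D + t • E)
    have hWron := add_le_add hDW hEW
    rw [← mul_add, ← add_mul, hderiv f hfD hfE, hderiv _ (hfD.fwdDiff W) (hfE.fwdDiff W),
      hfD.apply_add_smul_add_smul hfE,
      (hfD.fwdDiff W).apply_add_smul_add_smul (hfE.fwdDiff W)] at hWron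
    linarith

end Rayleigh

/-! ### Real stability -/

section ScalarStability

lemma eq_zero_or_im_neg_of_forall_add_mul_ne_zero {c : ℝ} (hc : 0 ≤ c) {β : ℂ}
    (h : ∀ y : ℂ, 0 ≤ y.im → c + y * β ≠ 0) : β = 0 ∨ β.im < 0 := by
  by_contra! hβ
  obtain ⟨hβ₀, hβ_im⟩ := hβ
  refine h ((-c : ℝ) * β⁻¹) ?_ (by push_cast; field_simp; ring)
  rw [Complex.im_ofReal_mul, Complex.inv_im, neg_mul, ← mul_neg, neg_div, neg_neg]
  exact mul_nonneg hc (div_nonneg hβ_im (Complex.normSq_nonneg β))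

/-- Writing `b = β k` and `g = γ k`, a zero of `a - c k` turns the biaffine polynomial into
`k ((y + γ) (z + β) + c - β γ)`, which has a zero with `y + γ = i T` for every large `T`. -/
lemma sub_mul_ne_zero_of_biaffine_ne_zero {a b g k : ℂ} {c : ℝ} (hc : 0 ≤ c)
    (h : ∀ y z : ℂ, 0 ≤ y.im → 0 ≤ z.im → a + y * b + z * g + y * z * k ≠ 0) :
    a - c * k ≠ 0 := by
  intro h₀
  obtain rfl : a = c * k := sub_eq_zero.1 h₀
  have hk : k ≠ 0 := by
    rintro rfl
    exact h 0 0 le_rfl le_rfl (by simp)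
  obtain ⟨β, rfl⟩ : ∃ β, b = β * k := ⟨b / k, (div_mul_cancel₀ b hk).symm⟩
  obtain ⟨γ, rfl⟩ : ∃ γ, g = γ * k := ⟨g / k, (div_mul_cancel₀ g hk).symm⟩
  have hmonic : ∀ y z : ℂ, 0 ≤ y.im → 0 ≤ z.im → (y + γ) * (z + β) + c - γ * β ≠ 0 :=
    fun y z hy hz h₁ => h y z hy hz (by linear_combination k * h₁)
  have hβ := eq_zero_or_im_neg_of_forall_add_mul_ne_zero hc (β := β) fun y hy h₁ =>
    hmonic y 0 hy le_rfl (by linear_combination h₁)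
  have hγ := eq_zero_or_im_neg_of_forall_add_mul_ne_zero hc (β := γ) fun z hz h₁ =>
    hmonic 0 z le_rfl hz (by linear_combination h₁)
  have hγ_im : γ.im ≤ 0 := by
    rcases hγ with rfl | hγ
    exacts [le_rfl, hγ.le]
  obtain ⟨T, hT, hTβ⟩ : ∃ T : ℝ, 0 < T ∧ T * β.im ≤ c - (γ * β).re := by
    rcases hβ with rfl | hβ
    · exact ⟨1, one_pos, by simpa using hc⟩
    · refine ⟨(|c - (γ * β).re| + 1) / -β.im, div_pos (by positivity) (by linarith), ?_⟩
      rw [div_neg, neg_mul, div_mul_cancel₀ _ hβ.ne]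
      linarith [neg_abs_le (c - (γ * β).re)]
  have hTc : (T : ℂ) ≠ 0 := Complex.ofReal_ne_zero.2 hT.ne'
  refine hmonic (Complex.I * T - γ) (Complex.I * (c - γ * β) / T - β) ?_ ?_ ?_
  · simp only [Complex.sub_im, Complex.mul_im, Complex.I_re, Complex.I_im, Complex.ofReal_re,
      zero_mul, one_mul, zero_add]
    linarith
  · rw [Complex.sub_im, Complex.div_ofReal_im, Complex.I_mul_im, Complex.sub_re,
      Complex.ofReal_re, sub_nonneg, le_div_iff₀ hT]
    linarith
  · field_simp
    linear_combination T * (c - γ * β) * Complex.I_sq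

/-- If the inequality failed, the root `y` for `z = i` would lie in the open upper half-plane at
`η = 0`, hence also for small `η > 0`. -/
lemma mul_le_mul_of_biaffine_ne_zero {a b g k : ℝ → ℂ} (ha : Continuous a) (hb : Continuous b)
    (hg : Continuous g) (hk : Continuous k) {A B C K : ℝ} (ha₀ : a 0 = A) (hb₀ : b 0 = B)
    (hg₀ : g 0 = C) (hk₀ : k 0 = K)
    (h : ∀ η : ℝ, 0 < η → ∀ y z : ℂ, 0 ≤ y.im → 0 ≤ z.im →
      a η + y * b η + z * g η + y * z * k η ≠ 0) : A * K ≤ B * C := by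
  by_contra! hlt
  have hden₀ : b 0 + Complex.I * k 0 ≠ 0 := by
    rw [hb₀, hk₀]
    intro h₀
    have hB : B = 0 := by simpa using congrArg Complex.re h₀
    have hK : K = 0 := by simpa using congrArg Complex.im h₀
    simp [hB, hK] at hlt
  set root : ℝ → ℂ := fun η => -(a η + Complex.I * g η) / (b η + Complex.I * k η) with hroot
  have hroot₀ : 0 < (root 0).im := by
    have : 0 < A * K - B * C := sub_pos.2 hlt
    simp only [hroot, hb₀, hk₀] at hden₀ ⊢
    rw [ha₀, hg₀, Complex.div_im, ← sub_div]
    refine div_pos ?_ (Complex.normSq_pos.2 hden₀)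
    simp only [Complex.neg_re, Complex.neg_im, Complex.add_re, Complex.add_im, Complex.ofReal_re,
      Complex.ofReal_im, Complex.I_mul_re, Complex.I_mul_im]
    linarith
  have hden_ne : ∀ᶠ η in nhds (0 : ℝ), b η + Complex.I * k η ≠ 0 :=
    ContinuousAt.eventually_ne (by fun_prop) hden₀
  have hroot_cont : ContinuousAt root 0 := ContinuousAt.div (by fun_prop) (by fun_prop) hden₀
  have hroot_pos : ∀ᶠ η in nhds (0 : ℝ), 0 < (root η).im :=
    (Complex.continuous_im.continuousAt.comp hroot_cont).eventually (lt_mem_nhds hroot₀)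
  obtain ⟨η, ⟨hne, hpos⟩, hη⟩ :=
    (((hden_ne.and hroot_pos).filter_mono nhdsWithin_le_nhds).and
      (self_mem_nhdsWithin (s := Set.Ioi 0))).exists
  refine h η hη (root η) Complex.I hpos.le (by simp) ?_
  have : root η * (b η + Complex.I * k η) = -(a η + Complex.I * g η) := div_mul_cancel₀ _ hne
  linear_combination this

end ScalarStability

section Stability

variable {V W : Type*} [AddCommGroup V] [Module ℝ V] [AddCommGroup W] [Module ℂ W]
  {j : V →ₗ[ℝ] W} {S : Set V} {e : V} {f : V → ℝ} {F : W → ℂ} {c : ℝ} {D E : V}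

/-- The function `F`, on a complexification `j : V → W`, extends `f` and is affine along every
direction of `S`. It has no zeros whose imaginary part is `η e + P` with `η > 0` and `P` in the
convex cone generated by `S`; these points play the role of the upper half-plane. -/
structure IsStableExtension (j : V →ₗ[ℝ] W) (S : Set V) (e : V) (f : V → ℝ) (F : W → ℂ) :
    Prop where
  apply_map : ∀ X, F (j X) = f X
  affineAlong : ∀ D ∈ S, AffineAlong F (j D)
  continuous : ∀ X, Continuous fun η : ℝ => F (j X + Complex.I • j (η • e))
  ne_zero : ∀ X, ∀ η : ℝ, 0 < η → ∀ P ∈ PointedCone.hull ℝ S,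
    F (j X + Complex.I • j (η • e + P)) ≠ 0

/-- A multi-affine real stable function: one that has a stable extension. -/
def RealStable (j : V →ₗ[ℝ] W) (S : Set V) (e : V) (f : V → ℝ) : Prop :=
  ∃ F, IsStableExtension j S e f F

namespace IsStableExtension

lemma apply_fwdDiff (h : IsStableExtension j S e f F) (D X : V) :
    Δ_[j D] F (j X) = Δ_[D] f X := by
  simp [fwdDiff, ← map_add, h.apply_map]

lemma apply_fwdDiff_fwdDiff (h : IsStableExtension j S e f F) (D E X : V) :
    Δ_[j D] (Δ_[j E] F) (j X) = Δ_[D] (Δ_[E] f) X := by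
  simp only [fwdDiff, ← map_add, h.apply_map, Complex.ofReal_sub]

lemma continuous_fwdDiff (h : IsStableExtension j S e f F) (D X : V) :
    Continuous fun η : ℝ => Δ_[j D] F (j X + Complex.I • j (η • e)) := by
  simp only [fwdDiff, add_right_comm (j X), ← map_add]
  exact (h.continuous _).sub (h.continuous _)

lemma continuous_fwdDiff_fwdDiff (h : IsStableExtension j S e f F) (D E X : V) :
    Continuous fun η : ℝ => Δ_[j D] (Δ_[j E] F) (j X + Complex.I • j (η • e)) := by
  rw [show (fun η : ℝ => Δ_[j D] (Δ_[j E] F) (j X + Complex.I • j (η • e))) = fun η =>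
    Δ_[j E] F (j (X + D) + Complex.I • j (η • e)) - Δ_[j E] F (j X + Complex.I • j (η • e)) by
      ext η; rw [fwdDiff, add_right_comm, ← map_add]]
  exact (h.continuous_fwdDiff E _).sub (h.continuous_fwdDiff E _)

lemma biaffine_ne_zero (h : IsStableExtension j S e f F) (hD : D ∈ S) (hE : E ∈ S) (X : V)
    {η : ℝ} (hη : 0 < η) {P : V} (hP : P ∈ PointedCone.hull ℝ S) {y z : ℂ} (hy : 0 ≤ y.im)
    (hz : 0 ≤ z.im) :
    F (j X + Complex.I • j (η • e + P)) + y * Δ_[j D] F (j X + Complex.I • j (η • e + P)) +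
      z * Δ_[j E] F (j X + Complex.I • j (η • e + P)) +
      y * z * Δ_[j D] (Δ_[j E] F) (j X + Complex.I • j (η • e + P)) ≠ 0 := by
  rw [← (h.affineAlong D hD).apply_add_smul_add_smul (h.affineAlong E hE)]
  have hsplit : ∀ (w : ℂ) (A : V), w • j A = j (w.re • A) + Complex.I • j (w.im • A) := by
    intro w A
    rw [map_smul, map_smul, ← Complex.coe_smul, ← Complex.coe_smul, smul_smul, ← add_smul,
      mul_comm Complex.I, Complex.re_add_im]
  convert h.ne_zero (X + y.re • D + z.re • E) η hη (P + y.im • D + z.im • E)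
    (add_mem (add_mem hP (smul_mem_hull hD hy)) (smul_mem_hull hE hz)) using 2
  simp only [hsplit y, hsplit z, map_add, smul_add]
  abel

protected lemma mixedOp (h : IsStableExtension j S e f F) (hc : 0 ≤ c) (hD : D ∈ S) (hE : E ∈ S) :
    IsStableExtension j S e (mixedOp c D E f) (mixedOp (c : ℂ) (j D) (j E) F) where
  apply_map X := by
    rw [mixedOp_apply, mixedOp_apply, h.apply_map, h.apply_fwdDiff_fwdDiff]
    push_cast
    rfl
  affineAlong W hW := (h.affineAlong W hW).mixedOp _ _ _
  continuous X := by
    simp only [mixedOp_apply]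
    exact (h.continuous X).sub (continuous_const.mul (h.continuous_fwdDiff_fwdDiff D E X))
  ne_zero X η hη P hP := by
    rw [mixedOp_apply]
    exact sub_mul_ne_zero_of_biaffine_ne_zero hc fun y z hy hz =>
      h.biaffine_ne_zero hD hE X hη hP hy hz

end IsStableExtension

namespace RealStable

protected lemma rayleigh (h : RealStable j S e f) : Rayleigh S f where
  affineAlong D hD X t := by
    obtain ⟨F, hF⟩ := h
    have := hF.affineAlong D hD (j X) t
    rw [Complex.coe_smul, ← map_smul, ← map_add, hF.apply_map, hF.apply_map,
      hF.apply_fwdDiff] at this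
    exact_mod_cast this
  mul_fwdDiff_fwdDiff_le D hD E hE X := by
    obtain ⟨F, hF⟩ := h
    refine mul_le_mul_of_biaffine_ne_zero (hF.continuous X) (hF.continuous_fwdDiff D X)
      (hF.continuous_fwdDiff E X) (hF.continuous_fwdDiff_fwdDiff D E X)
      ?_ ?_ ?_ ?_ fun η hη y z hy hz => ?_
    · simpa using hF.apply_map X
    · simpa using hF.apply_fwdDiff D X
    · simpa using hF.apply_fwdDiff E X
    · simpa using hF.apply_fwdDiff_fwdDiff D E X
    · simpa using hF.biaffine_ne_zero hD hE X hη (zero_mem _) hy hz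

protected lemma mixedPoly (h : RealStable j S e f) (hc : 0 ≤ c) :
    ∀ L : List (V × V), (∀ p ∈ L, p.1 ∈ S ∧ p.2 ∈ S) → RealStable j S e (mixedPoly c f L)
  | [], _ => h
  | p :: L, hL => by
    rw [List.forall_mem_cons] at hL
    obtain ⟨F, hF⟩ := h.mixedPoly hc L hL.2
    exact ⟨_, hF.mixedOp hc hL.1.1 hL.1.2⟩

end RealStable

section Prod

variable {V' W' : Type*} [AddCommGroup V'] [Module ℝ V'] [AddCommGroup W'] [Module ℂ W']
  {j' : V' →ₗ[ℝ] W'} {S' : Set V'} {e' : V'} {f' : V' → ℝ}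

/-- The directions of a product space that change one coordinate by a direction of `S` or the other
by a direction of `S'`. -/
def coordDirections (S : Set V) (S' : Set V') : Set (V × V') :=
  (fun D => (D, 0)) '' S ∪ (fun D => (0, D)) '' S'

lemma mem_hull_coordDirections {P : V × V'} :
    P ∈ PointedCone.hull ℝ (coordDirections S S') ↔
      P.1 ∈ PointedCone.hull ℝ S ∧ P.2 ∈ PointedCone.hull ℝ S' := by
  rw [← Submodule.mem_prod, ← LinearMap.span_inl_union_inr]
  rfl

protected lemma AboveRoots.prod {X : V} {X' : V'} (h : AboveRoots S f X)
    (h' : AboveRoots S' f' X') :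
    AboveRoots (coordDirections S S') (fun Z => f Z.1 * f' Z.2) (X, X') := by
  intro P hP
  rw [mem_hull_coordDirections] at hP
  exact mul_pos (h _ hP.1) (h' _ hP.2)

protected lemma RealStable.prod (h : RealStable j S e f) (h' : RealStable j' S' e' f') :
    RealStable (j.prodMap j') (coordDirections S S') (e, e') (fun Z => f Z.1 * f' Z.2) := by
  obtain ⟨F, hF⟩ := h
  obtain ⟨F', hF'⟩ := h'
  refine ⟨fun Z => F Z.1 * F' Z.2, ?_, ?_, ?_, ?_⟩
  · intro X
    simp [hF.apply_map, hF'.apply_map]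
  · rintro _ (⟨D, hD, rfl⟩ | ⟨D, hD, rfl⟩)
    · simpa using (hF.affineAlong D hD).prod_inl F'
    · simpa using (hF'.affineAlong D hD).prod_inr F
  · intro X
    exact (hF.continuous X.1).mul (hF'.continuous X.2)
  · intro X η hη P hP
    rw [mem_hull_coordDirections] at hP
    exact mul_ne_zero (hF.ne_zero _ η hη _ hP.1) (hF'.ne_zero _ η hη _ hP.2)

end Prod

end Stability

/-! ### Choosing one outcome from the average -/

section Selection

variable {V W : Type*} [AddCommGroup V] [Module ℝ V] [AddCommGroup W] [Module ℂ W]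
  {j : V →ₗ[ℝ] W} {S : Set V} {e X₀ : V} {f : V → ℝ} {c φ : ℝ}

lemma RealStable.aboveRoots_mixedPoly_and_fwdDiff_mul_le (hf : RealStable j S e f)
    (h : AboveRoots S f X₀) (hc : 0 ≤ c) (hφ : 0 < φ) (hcφ : c * φ ^ 2 ≤ 1) (L : List (V × V))
    (hL : ∀ p ∈ L, p.1 ∈ S ∧ p.2 ∈ S) (hLφ : ∀ p ∈ L, Δ_[p.1] f X₀ + Δ_[p.2] f X₀ ≤ φ * f X₀) :
    AboveRoots S (mixedPoly c f L) (X₀ + (c * φ) • (L.map fun p => p.1 + p.2).sum) ∧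
      ∀ D ∈ S, Δ_[D] (mixedPoly c f L) (X₀ + (c * φ) • (L.map fun p => p.1 + p.2).sum) * f X₀ ≤
        mixedPoly c f L (X₀ + (c * φ) • (L.map fun p => p.1 + p.2).sum) * Δ_[D] f X₀ := by
  induction L with
  | nil => simpa [mixedPoly, mul_comm] using h
  | cons p L ih =>
    rw [List.forall_mem_cons] at hL hLφ
    obtain ⟨habove, hbarrier⟩ := ih hL.2 hLφ.2
    obtain ⟨⟨hD, hE⟩, hL⟩ := hL
    have hR := (hf.mixedPoly hc L hL).rayleigh
    rw [List.map_cons, List.sum_cons, smul_add, add_left_comm, add_comm]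
    set Y := X₀ + (c * φ) • (L.map fun p => p.1 + p.2).sum
    have hY : Δ_[p.1] (mixedPoly c f L) Y + Δ_[p.2] (mixedPoly c f L) Y ≤
        φ * mixedPoly c f L Y := by
      refine le_of_mul_le_mul_right ?_ h.pos
      nlinarith [hbarrier p.1 hD, hbarrier p.2 hE, mul_le_mul_of_nonneg_left hLφ.1 habove.pos.le]
    have habove' := habove.mixedOp hR hD hE hc hcφ hY
    have hshift : (c * φ) • (p.1 + p.2) ∈ PointedCone.hull ℝ S :=
      PointedCone.smul_mem _ (by positivity)
        (add_mem (PointedCone.subset_hull hD) (PointedCone.subset_hull hE))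
    refine ⟨habove'.add hshift, fun U hU => ?_⟩
    have hstep := habove.fwdDiff_mixedOp_mul_le hR hD hE hU hc hφ hcφ hY
    refine le_of_mul_le_mul_right ?_ habove.pos
    have hpos := (habove'.add hshift).pos
    calc _ = Δ_[U] (mixedPoly c f (p :: L)) (Y + (c * φ) • (p.1 + p.2)) * mixedPoly c f L Y
            * f X₀ := by ring
      _ ≤ mixedPoly c f (p :: L) (Y + (c * φ) • (p.1 + p.2)) * Δ_[U] (mixedPoly c f L) Y * f X₀ :=
          mul_le_mul_of_nonneg_right hstep h.pos.le
      _ ≤ mixedPoly c f (p :: L) (Y + (c * φ) • (p.1 + p.2)) *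
            (mixedPoly c f L Y * Δ_[U] f X₀) := by
          rw [mul_assoc]
          exact mul_le_mul_of_nonneg_left (hbarrier U hU) hpos.le
      _ = _ := by ring

/-- Deciding the pairs one after the other, a point above the roots of the averaged polynomial is
moved to a point above the roots of `f`. The hypothesis `hcone` anchors `AboveRoots.of_mixedOp`. -/
lemma RealStable.exists_sublist_aboveRoots (hf : RealStable j S e f) {s : ℝ} (hs₀ : 0 ≤ s)
    (hs₁ : s ≤ 1) (L : List (V × V)) (hL : ∀ p ∈ L, p.1 ∈ S ∧ p.2 ∈ S)
    (hcone : ∀ L' : List (V × V), L'.Sublist L → ∃ P ∈ PointedCone.hull ℝ S,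
      AboveRoots S (mixedPoly (s * (1 - s)) f L') (X₀ + P)) :
    ∀ X, (∃ P ∈ PointedCone.hull ℝ S, X + P - X₀ ∈ PointedCone.hull ℝ S) →
      AboveRoots S (mixedPoly (s * (1 - s)) f L) X →
      ∃ L' : List (V × V), L'.Sublist L ∧ AboveRoots S f
        (X + ((L'.map fun p => p.1 - p.2).sum - s • (L.map fun p => p.1 - p.2).sum)) := by
  induction L with
  | nil => exact fun X _ h => ⟨[], .slnil, by simpa [mixedPoly] using h⟩
  | cons p L ih =>
    rintro X ⟨P, hP, hPX₀⟩ h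
    rw [List.forall_mem_cons] at hL
    obtain ⟨⟨hD, hE⟩, hL⟩ := hL
    specialize ih hL fun L' hL' => hcone L' (hL'.cons p)
    have hc : 0 ≤ s * (1 - s) := mul_nonneg hs₀ (sub_nonneg.2 hs₁)
    have hR := (hf.mixedPoly hc L hL).rayleigh
    have hX : AboveRoots S (mixedPoly (s * (1 - s)) f L) X := by
      obtain ⟨Q, hQ, hQabove⟩ := hcone L (List.sublist_cons_self p L)
      refine AboveRoots.of_mixedOp hR hc hD hE (add_mem hP hQ) X h ?_
      convert hQabove.add hPX₀ using 1
      abel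
    have hcone' : ∀ t : ℝ, ∃ P' ∈ PointedCone.hull ℝ S,
        X + t • (p.1 - p.2) + P' - X₀ ∈ PointedCone.hull ℝ S := by
      intro t
      refine ⟨P + (|t| • p.1 + |t| • p.2), add_mem hP (add_mem (smul_mem_hull hD (abs_nonneg t))
        (smul_mem_hull hE (abs_nonneg t))), ?_⟩
      convert add_mem hPX₀ (add_mem (smul_mem_hull hD (t := |t| + t) (by linarith [neg_abs_le t]))
        (smul_mem_hull hE (t := |t| - t) (sub_nonneg.2 (le_abs_self t)))) using 1
      module
    rcases hX.add_smul_sub_or hR hD hE hs₀ hs₁ h.pos with hup | hdown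
    · obtain ⟨L', hL', hL'above⟩ := ih _ (hcone' _) hup
      refine ⟨p :: L', hL'.cons_cons p, ?_⟩
      convert hL'above using 1
      simp only [List.map_cons, List.sum_cons]
      module
    · obtain ⟨L', hL', hL'above⟩ := ih _ (hcone' _) hdown
      refine ⟨L', hL'.cons p, ?_⟩
      convert hL'above using 1
      simp only [List.map_cons, List.sum_cons]
      module

theorem RealStable.exists_finset_aboveRoots (hf : RealStable j S e f) (hX₀ : AboveRoots S f X₀)
    {κ : Type*} [Fintype κ] {D E : κ → V} (hD : ∀ k, D k ∈ S) (hE : ∀ k, E k ∈ S) (hφ : 0 < φ)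
    (hDE : ∀ k, Δ_[D k] f X₀ + Δ_[E k] f X₀ ≤ φ * f X₀) {s : ℝ} (hs₀ : 0 ≤ s) (hs₁ : s ≤ 1)
    (hsφ : s * (1 - s) * φ ^ 2 ≤ 1) :
    ∃ F : Finset κ, AboveRoots S f (X₀ + (s * (1 - s) * φ) • ∑ k, (D k + E k) +
      (∑ k ∈ F, (D k - E k) - s • ∑ k, (D k - E k))) := by
  classical
  have hc : 0 ≤ s * (1 - s) := mul_nonneg hs₀ (sub_nonneg.2 hs₁)
  set L := Finset.univ.toList.map fun k => (D k, E k) with hL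
  have hLS : ∀ p ∈ L, p.1 ∈ S ∧ p.2 ∈ S := by simp [hL, hD, hE]
  have hLφ : ∀ p ∈ L, Δ_[p.1] f X₀ + Δ_[p.2] f X₀ ≤ φ * f X₀ := by simp [hL, hDE]
  have hbarrier : ∀ L' : List (V × V), L'.Sublist L →
      AboveRoots S (mixedPoly (s * (1 - s)) f L')
        (X₀ + (s * (1 - s) * φ) • (L'.map fun p => p.1 + p.2).sum) := fun L' hL' =>
    (hf.aboveRoots_mixedPoly_and_fwdDiff_mul_le hX₀ hc hφ hsφ L'
      (fun p hp => hLS p (hL'.subset hp)) fun p hp => hLφ p (hL'.subset hp)).1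
  have hcone : ∀ L' : List (V × V), L'.Sublist L →
      (s * (1 - s) * φ) • (L'.map fun p => p.1 + p.2).sum ∈ PointedCone.hull ℝ S := by
    refine fun L' hL' => PointedCone.smul_mem _ (by positivity) (list_sum_mem fun x hx => ?_)
    obtain ⟨p, hp, rfl⟩ := List.mem_map.1 hx
    have := hLS p (hL'.subset hp)
    exact add_mem (PointedCone.subset_hull this.1) (PointedCone.subset_hull this.2)
  obtain ⟨L', hL', habove⟩ := hf.exists_sublist_aboveRoots hs₀ hs₁ L hLS
    (fun L' hL' => ⟨_, hcone L' hL', hbarrier L' hL'⟩) _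
    ⟨0, zero_mem _, by simpa using hcone L (.refl L)⟩ (hbarrier L (.refl L))
  obtain ⟨K, hK, rfl⟩ := List.sublist_map_iff.1 hL'
  refine ⟨K.toFinset, ?_⟩
  rw [List.sum_toFinset _ ((Finset.nodup_toList _).sublist hK)]
  simpa only [hL, List.map_map, Function.comp_def, Finset.sum_map_toList] using habove

/-- In the product `f X * f X'`, pairing the direction `w k` of `X` with the same direction of `X'`
moves the two points in opposite ways, which bounds the fluctuation from both sides. -/
theorem RealStable.exists_finset_forall_ne_zero (hf : RealStable j S e f)
    (hX₀ : AboveRoots S f X₀) {κ : Type*} [Fintype κ] {w : κ → V} (hw : ∀ k, w k ∈ S)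
    (hφ : 0 < φ) (hwφ : ∀ k, 2 * Δ_[w k] f X₀ ≤ φ * f X₀) {s : ℝ} (hs₀ : 0 ≤ s) (hs₁ : s ≤ 1)
    (hsφ : s * (1 - s) * φ ^ 2 ≤ 1) :
    ∃ F : Finset κ, ∀ P ∈ PointedCone.hull ℝ S,
      f (X₀ + (s * (1 - s) * φ) • ∑ k, w k + (∑ k ∈ F, w k - s • ∑ k, w k) + P) ≠ 0 ∧
      f (X₀ + (s * (1 - s) * φ) • ∑ k, w k - (∑ k ∈ F, w k - s • ∑ k, w k) + P) ≠ 0 := by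
  have hpair : ∀ k, Δ_[((w k, 0) : V × V)] (fun Z => f Z.1 * f Z.2) (X₀, X₀) +
      Δ_[((0, w k) : V × V)] (fun Z => f Z.1 * f Z.2) (X₀, X₀) ≤ φ * (f X₀ * f X₀) := by
    intro k
    have := mul_le_mul_of_nonneg_right (hwφ k) hX₀.pos.le
    simp only [fwdDiff, Prod.mk_add_mk, add_zero] at this ⊢
    linarith
  obtain ⟨F, hF⟩ := (hf.prod hf).exists_finset_aboveRoots (hX₀.prod hX₀)
    (fun k => .inl ⟨w k, hw k, rfl⟩) (fun k => .inr ⟨w k, hw k, rfl⟩) hφ hpair hs₀ hs₁ hsφ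
  refine ⟨F, fun P hP => ?_⟩
  have := (hF (P, P) (mem_hull_coordDirections.2 ⟨hP, hP⟩)).ne'
  convert mul_ne_zero_iff.1 this using 3
  · simp [Prod.fst_sum]
  · simp only [Prod.snd_add, Prod.snd_sub, Prod.smul_snd, Prod.snd_sum, zero_add, zero_sub,
      Finset.sum_neg_distrib, smul_neg]
    abel

end Selection

/-! ### Determinants of symmetric matrices -/

section Matrices

variable {ι : Type*} [Fintype ι]

section Determinant

variable [DecidableEq ι]

/-- The Schur complement turns the rank-one update into a change of a single column. -/
lemma affineAlong_det_vecMulVec {R : Type*} [CommRing R] (u v : ι → R) :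
    AffineAlong (det : Matrix ι ι R → R) (vecMulVec u v) := by
  intro Y t
  set M := fromBlocks Y 0 (replicateRow Unit v) (0 : Matrix Unit Unit R) with hM
  have hdet : ∀ r : R, (Y + r • vecMulVec u v).det =
      (M.updateCol (.inr ()) (Sum.elim 0 1)).det +
        r * (M.updateCol (.inr ()) (Sum.elim (-u) 0)).det := by
    intro r
    have hcol : Sum.elim (-(r • u)) 1 =
        (Sum.elim 0 1 : ι ⊕ Unit → R) + r • (Sum.elim (-u) 0 : ι ⊕ Unit → R) := by
      ext (i | i) <;> simp
    have hblocks : M.updateCol (.inr ()) (Sum.elim (-(r • u)) 1) =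
        fromBlocks Y (replicateCol Unit (-(r • u))) (replicateRow Unit v) 1 := by
      ext (i | i) (k | k) <;> simp [hM]
    rw [← det_updateCol_smul, ← det_updateCol_add, ← hcol, hblocks, det_fromBlocks_one₂₂]
    congr 1
    ext i k
    simp [vecMulVec_apply, Matrix.mul_apply, mul_assoc]
  have h₁ := hdet 1
  have h₀ := hdet 0
  rw [one_smul] at h₁
  rw [zero_smul, add_zero] at h₀
  rw [fwdDiff, hdet t, h₁, h₀]
  ring

lemma det_smul_one_add_vecMulVec_self {K : Type*} [Field K] {α : K} (hα : α ≠ 0) (u v : ι → K) :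
    (α • (1 : Matrix ι ι K) + vecMulVec u v).det =
      (1 + (v ⬝ᵥ u) / α) * (α • (1 : Matrix ι ι K)).det := by
  have h : α • (1 : Matrix ι ι K) + vecMulVec u v =
      α • (1 + replicateCol Unit (α⁻¹ • u) * replicateRow Unit v) := by
    rw [smul_add, replicateCol_smul, Matrix.smul_mul, smul_inv_smul₀ hα, vecMulVec_eq Unit]
  rw [h, det_smul, det_smul, det_one_add_replicateCol_mul_replicateRow, det_one, dotProduct_smul,
    smul_eq_mul]
  ring

lemma det_add_I_smul_ne_zero {X Y : Matrix ι ι ℂ} (hX : X.IsHermitian) (hY : Y.PosDef) :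
    (X + Complex.I • Y).det ≠ 0 := by
  intro h
  obtain ⟨v, hv, hker⟩ := exists_mulVec_eq_zero_iff.2 h
  have hform : star v ⬝ᵥ (X + Complex.I • Y) *ᵥ v = 0 := by rw [hker, dotProduct_zero]
  rw [add_mulVec, dotProduct_add, smul_mulVec, dotProduct_smul, smul_eq_mul] at hform
  have him := congrArg Complex.im hform
  rw [Complex.add_im, Complex.I_mul_im, Complex.zero_im] at him
  have hX_im : (star v ⬝ᵥ X *ᵥ v).im = 0 := hX.im_star_dotProduct_mulVec_self v
  have hY_re : 0 < (star v ⬝ᵥ Y *ᵥ v).re := hY.re_dotProduct_pos hv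
  linarith

lemma posSemidef_of_forall_det_add_ne_zero {X : Matrix ι ι ℝ} (hX : X.IsHermitian)
    (h : ∀ P : Matrix ι ι ℝ, P.PosSemidef → (X + P).det ≠ 0) : X.PosSemidef := by
  refine posSemidef_iff_isHermitian_and_spectrum_nonneg.2 ⟨hX, fun t ht => ?_⟩
  by_contra hneg
  refine h (-t • 1) (PosSemidef.one.smul (neg_nonneg.2 (not_le.1 hneg).le)) ?_
  rw [spectrum.mem_iff, isUnit_iff_isUnit_det, isUnit_iff_ne_zero, not_not,
    Algebra.algebraMap_eq_smul_one] at ht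
  rw [neg_smul, ← sub_eq_add_neg, ← neg_sub, det_neg, ht, mul_zero]

end Determinant

lemma posSemidef_map_ofReal {ι : Type*} [Finite ι] {X : Matrix ι ι ℝ} (hX : X.PosSemidef) :
    (X.map ((↑) : ℝ → ℂ)).PosSemidef := by
  cases nonempty_fintype ι
  obtain ⟨m, v, rfl⟩ := posSemidef_iff_eq_sum_vecMulVec.1 hX
  refine posSemidef_iff_eq_sum_vecMulVec.2 ⟨m, fun k i => v k i, ?_⟩
  ext i k
  simp [Matrix.sum_apply, vecMulVec_apply]

variable (ι) in
/-- The space of real symmetric matrices. -/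
abbrev SymMat : Type _ := selfAdjoint (Matrix ι ι ℝ)

namespace SymMat

/-- The symmetric matrix `w wᵀ`. -/
def rankOne (w : ι → ℝ) : SymMat ι := ⟨vecMulVec w w, by
  rw [selfAdjoint.mem_iff, star_eq_conjTranspose, conjTranspose_vecMulVec, star_trivial]⟩

/-- The inclusion of the real symmetric matrices into the complex matrices. -/
def toComplex : SymMat ι →ₗ[ℝ] Matrix ι ι ℂ where
  toFun X := (X : Matrix ι ι ℝ).map (↑)
  map_add' X Y := by ext; simp
  map_smul' t X := by ext; simp

lemma mem_hull_range_rankOne {ι : Type*} [Finite ι] {P : SymMat ι} :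
    P ∈ PointedCone.hull ℝ (Set.range rankOne) ↔ (P : Matrix ι ι ℝ).PosSemidef := by
  cases nonempty_fintype ι
  constructor
  · intro hP
    induction hP using hull_induction with
    | zero => exact .zero
    | add P Q _ _ ihP ihQ => exact ihP.add ihQ
    | smul D hD t ht =>
      obtain ⟨w, rfl⟩ := hD
      simpa using! (posSemidef_vecMulVec_self_star w).smul ht
  · intro hP
    obtain ⟨m, w, hw⟩ := posSemidef_iff_eq_sum_vecMulVec.1 hP
    have : P = ∑ k, rankOne (w k) := by
      ext1
      simpa [rankOne] using hw
    rw [this]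
    exact sum_mem fun k _ => PointedCone.subset_hull ⟨w k, rfl⟩

variable [DecidableEq ι]

lemma realStable_det :
    RealStable toComplex (Set.range rankOne) (1 : SymMat ι) fun X => (X : Matrix ι ι ℝ).det := by
  refine ⟨det, ?_, ?_, ?_, ?_⟩
  · intro X
    exact (Complex.ofRealHom.map_det _).symm
  · rintro _ ⟨w, rfl⟩
    convert affineAlong_det_vecMulVec (fun i => (w i : ℂ)) fun i => (w i : ℂ)
    ext
    simp [toComplex, rankOne, vecMulVec_apply]
  · intro X
    simp only [map_smul]
    fun_prop
  · intro X η hη P hP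
    refine det_add_I_smul_ne_zero ?_ ?_
    · ext i k
      simpa [toComplex] using! congrFun (congrFun X.2 i) k
    · have hone : toComplex (η • (1 : SymMat ι)) = (η : ℂ) • (1 : Matrix ι ι ℂ) := by
        ext i k
        rcases eq_or_ne i k with rfl | hik
        · simp [toComplex]
        · simp [toComplex, hik]
      rw [map_add, hone]
      exact (PosDef.one.smul (Complex.zero_lt_real.2 hη)).add_posSemidef
        (posSemidef_map_ofReal (mem_hull_range_rankOne.1 hP))

lemma aboveRoots_det {α : ℝ} (hα : 0 < α) :
    AboveRoots (Set.range rankOne) (fun X : SymMat ι => (X : Matrix ι ι ℝ).det) (α • 1) :=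
  fun _ hP => ((PosDef.one.smul hα).add_posSemidef (mem_hull_range_rankOne.1 hP)).det_pos

lemma fwdDiff_det_rankOne {α : ℝ} (hα : α ≠ 0) (w : ι → ℝ) :
    Δ_[rankOne w] (fun X : SymMat ι => (X : Matrix ι ι ℝ).det) (α • 1) =
      (w ⬝ᵥ w) / α * ((α • 1 : SymMat ι) : Matrix ι ι ℝ).det := by
  have h := det_smul_one_add_vecMulVec_self hα w w
  rw [add_mul, one_mul] at h
  exact sub_eq_iff_eq_add'.2 h

lemma posSemidef_of_forall_det_ne_zero {X : SymMat ι}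
    (h : ∀ P ∈ PointedCone.hull ℝ (Set.range rankOne),
      ((X + P : SymMat ι) : Matrix ι ι ℝ).det ≠ 0) : (X : Matrix ι ι ℝ).PosSemidef :=
  posSemidef_of_forall_det_add_ne_zero X.2 fun P hP =>
    h ⟨P, hP.isHermitian⟩ (mem_hull_range_rankOne.2 hP)

end SymMat

theorem exists_finset_neg_le_and_le [DecidableEq ι] {κ : Type*} [Fintype κ] {u : κ → ι → ℝ}
    {α φ s : ℝ} (hα : 0 < α) (hφ : 0 < φ) (hu : ∀ k, 2 * (u k ⬝ᵥ u k) / α ≤ φ) (hs₀ : 0 ≤ s)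
    (hs₁ : s ≤ 1) (hsφ : s * (1 - s) * φ ^ 2 ≤ 1) :
    ∃ F : Finset κ,
      -(α • 1 + (s * (1 - s) * φ) • ∑ k, vecMulVec (u k) (u k)) ≤
        ∑ k ∈ F, vecMulVec (u k) (u k) - s • ∑ k, vecMulVec (u k) (u k) ∧
      ∑ k ∈ F, vecMulVec (u k) (u k) - s • ∑ k, vecMulVec (u k) (u k) ≤
        α • 1 + (s * (1 - s) * φ) • ∑ k, vecMulVec (u k) (u k) := by
  have hderiv : ∀ k, 2 * Δ_[SymMat.rankOne (u k)] (fun X : SymMat ι => (X : Matrix ι ι ℝ).det)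
      (α • 1) ≤ φ * ((α • 1 : SymMat ι) : Matrix ι ι ℝ).det := by
    intro k
    rw [SymMat.fwdDiff_det_rankOne hα.ne', ← mul_assoc, ← mul_div_assoc]
    exact mul_le_mul_of_nonneg_right (hu k) (SymMat.aboveRoots_det hα).pos.le
  obtain ⟨F, hF⟩ := SymMat.realStable_det.exists_finset_forall_ne_zero (SymMat.aboveRoots_det hα)
    (w := fun k => SymMat.rankOne (u k)) (fun k => ⟨u k, rfl⟩) hφ hderiv hs₀ hs₁ hsφ
  have hup := SymMat.posSemidef_of_forall_det_ne_zero fun P hP => (hF P hP).1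
  have hdown := SymMat.posSemidef_of_forall_det_ne_zero fun P hP => (hF P hP).2
  rw [← nonneg_iff_posSemidef] at hup hdown
  push_cast [SymMat.rankOne] at hup hdown
  exact ⟨F, neg_le_iff_add_nonneg'.2 hup, sub_nonneg.1 hdown⟩

theorem exists_finset_neg_smul_one_le_and_le_smul_one [DecidableEq ι] {κ : Type*} [Fintype κ]
    {u : κ → ι → ℝ} {ρ σ s : ℝ} (hρ : 0 < ρ) (hρσ : 2 * ρ ≤ σ) (hu : ∀ k, u k ⬝ᵥ u k ≤ ρ)
    (hσ : ∑ k, vecMulVec (u k) (u k) ≤ σ • (1 : Matrix ι ι ℝ)) (hs₀ : 0 < s) (hs₁ : s ≤ 1) :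
    ∃ F : Finset κ,
      -((2 * √(2 * s * ρ * σ)) • (1 : Matrix ι ι ℝ)) ≤
        ∑ k ∈ F, vecMulVec (u k) (u k) - s • ∑ k, vecMulVec (u k) (u k) ∧
      ∑ k ∈ F, vecMulVec (u k) (u k) - s • ∑ k, vecMulVec (u k) (u k) ≤
        (2 * √(2 * s * ρ * σ)) • (1 : Matrix ι ι ℝ) := by
  have hσ₀ : 0 < σ := by linarith
  have : 0 ≤ 1 - s := sub_nonneg.2 hs₁
  -- This `α` balances the two terms of `α + s (1 - s) φ σ` for `φ = 2 ρ / α`.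
  set α := √(2 * s * ρ * σ)
  have hα₀ : 0 < α := Real.sqrt_pos.2 (by positivity)
  have hα_sq : α ^ 2 = 2 * s * ρ * σ := Real.sq_sqrt (by positivity)
  have hsφ : s * (1 - s) * (2 * ρ / α) ^ 2 ≤ 1 := by
    rw [div_pow, hα_sq, mul_div_assoc', div_le_one (by positivity)]
    nlinarith [mul_nonneg (mul_nonneg hs₀.le hρ.le) (sub_nonneg.2 hρσ),
      mul_nonneg (mul_nonneg hs₀.le hs₀.le) (mul_nonneg hρ.le hρ.le)]
  obtain ⟨F, hlower, hupper⟩ := exists_finset_neg_le_and_le (φ := 2 * ρ / α) hα₀ (by positivity)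
    (fun k => by gcongr; exact hu k) hs₀.le hs₁ hsφ
  have hδσ : s * (1 - s) * (2 * ρ / α) * σ = (1 - s) * α := by
    field_simp
    linear_combination (-(1 - s)) * hα_sq
  have hbound : α • 1 + (s * (1 - s) * (2 * ρ / α)) • ∑ k, vecMulVec (u k) (u k) ≤
      (2 * α) • (1 : Matrix ι ι ℝ) := by
    refine (add_le_add_right (smul_le_smul_of_nonneg_left hσ (by positivity)) _).trans ?_
    rw [smul_smul, hδσ, ← add_smul]
    exact smul_le_smul_of_nonneg_right (by nlinarith) zero_le_one
  exact ⟨F, (neg_le_neg hbound).trans hlower, hupper.trans hbound⟩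

end Matrices

/-! ### Balancing the cardinality -/

section LoewnerOrder

lemma submatrix_le_submatrix {ι κ : Type*} {X Y : Matrix ι ι ℝ} (h : X ≤ Y) (r : κ → ι) :
    X.submatrix r r ≤ Y.submatrix r r :=
  PosSemidef.submatrix h r

/-- The vector `v` with one more coordinate, equal to `t`. -/
def appendCoord {ι : Type*} (t : ℝ) (v : ι → ℝ) : ι ⊕ Unit → ℝ := Sum.elim v fun _ => t

lemma appendCoord_dotProduct_appendCoord {ι : Type*} [Fintype ι] (t t' : ℝ) (v v' : ι → ℝ) :
    appendCoord t v ⬝ᵥ appendCoord t' v' = v ⬝ᵥ v' + t * t' := by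
  simp [appendCoord, sumElim_dotProduct_sumElim, dotProduct_pUnit]

lemma sum_vecMulVec_appendCoord_submatrix_inl {ι κ : Type*} (F : Finset κ) (t : ℝ)
    (b : κ → ι → ℝ) :
    (∑ k ∈ F, vecMulVec (appendCoord t (b k)) (appendCoord t (b k))).submatrix Sum.inl Sum.inl =
      ∑ k ∈ F, vecMulVec (b k) (b k) := by
  ext i i'
  simp [appendCoord, Matrix.sum_apply, vecMulVec_apply]

lemma sum_vecMulVec_appendCoord_inr_inr {ι κ : Type*} (F : Finset κ) (t : ℝ) (b : κ → ι → ℝ) :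
    (∑ k ∈ F, vecMulVec (appendCoord t (b k)) (appendCoord t (b k))) (Sum.inr ()) (Sum.inr ()) =
      F.card * t ^ 2 := by
  simp [appendCoord, Matrix.sum_apply, vecMulVec_apply, sq]

lemma card_mul_sq_le_of_sum_appendCoord_sub_le {ι κ : Type*} [DecidableEq ι] [Fintype κ]
    {F : Finset κ} {b : κ → ι → ℝ} {γ s x : ℝ}
    (h : ∑ k ∈ F, vecMulVec (appendCoord γ (b k)) (appendCoord γ (b k)) -
      s • ∑ k, vecMulVec (appendCoord γ (b k)) (appendCoord γ (b k)) ≤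
        x • (1 : Matrix (ι ⊕ Unit) (ι ⊕ Unit) ℝ)) :
    F.card * γ ^ 2 ≤ x + s * (Fintype.card κ * γ ^ 2) := by
  have hcorner := PosSemidef.diag_nonneg h (i := Sum.inr ())
  simpa only [Matrix.sub_apply, Matrix.smul_apply, sum_vecMulVec_appendCoord_inr_inr, one_apply_eq,
    smul_eq_mul, mul_one, sub_nonneg, tsub_le_iff_right, Finset.card_univ] using hcorner

variable {ι κ : Type*} [Fintype ι] [DecidableEq ι] [Fintype κ] {b : κ → ι → ℝ} {ρ σ s : ℝ}

lemma sum_vecMulVec_le_smul_one_iff :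
    ∑ k, vecMulVec (b k) (b k) ≤ σ • (1 : Matrix ι ι ℝ) ↔
      ∀ v : ι → ℝ, ∑ k, (b k ⬝ᵥ v) ^ 2 ≤ σ * (v ⬝ᵥ v) := by
  have hform : ∀ v : ι → ℝ, star v ⬝ᵥ (σ • 1 - ∑ k, vecMulVec (b k) (b k)) *ᵥ v =
      σ * (v ⬝ᵥ v) - ∑ k, (b k ⬝ᵥ v) ^ 2 := by
    intro v
    simp only [star_trivial, sub_mulVec, smul_mulVec, one_mulVec, sum_mulVec, vecMulVec_mulVec,
      dotProduct_sub, dotProduct_smul, dotProduct_sum, smul_eq_mul, op_smul_eq_smul]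
    simp only [sq, dotProduct_comm v]
  have hherm : (σ • 1 - ∑ k, vecMulVec (b k) (b k)).IsHermitian := by
    refine IsHermitian.sub (isHermitian_one.smul (.all σ)) (isSelfAdjoint_sum _ fun k _ => ?_)
    exact (posSemidef_vecMulVec_self_star (b k)).isHermitian
  rw [le_iff]
  refine ⟨fun h v => ?_, fun h => .of_dotProduct_mulVec_nonneg hherm fun v => ?_⟩
  · have := h.dotProduct_mulVec_nonneg v
    rwa [hform, sub_nonneg] at this
  · rw [hform, sub_nonneg]
    exact h v

lemma sum_vecMulVec_appendCoord_le {ι κ : Type*} [Finite ι] [DecidableEq ι] [Fintype κ]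
    {b : κ → ι → ℝ} {σ γ : ℝ} (hσ : ∑ k, vecMulVec (b k) (b k) ≤ σ • (1 : Matrix ι ι ℝ))
    (hγ : γ ^ 2 * Fintype.card κ ≤ σ) :
    ∑ k, vecMulVec (appendCoord γ (b k)) (appendCoord γ (b k)) ≤
      (2 * σ) • (1 : Matrix (ι ⊕ Unit) (ι ⊕ Unit) ℝ) := by
  cases nonempty_fintype ι
  rw [sum_vecMulVec_le_smul_one_iff] at hσ ⊢
  intro v
  obtain ⟨v, c, rfl⟩ : ∃ v' c, v = appendCoord c v' :=
    ⟨v ∘ Sum.inl, v (Sum.inr ()), (Sum.elim_comp_inl_inr v).symm⟩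
  simp only [appendCoord_dotProduct_appendCoord]
  calc ∑ k, (b k ⬝ᵥ v + γ * c) ^ 2
      ≤ ∑ k, (2 * (b k ⬝ᵥ v) ^ 2 + 2 * γ ^ 2 * c ^ 2) :=
        Finset.sum_le_sum fun k _ => by nlinarith [sq_nonneg (b k ⬝ᵥ v - γ * c)]
    _ = 2 * ∑ k, (b k ⬝ᵥ v) ^ 2 + 2 * (γ ^ 2 * Fintype.card κ) * c ^ 2 := by
        rw [Finset.sum_add_distrib, ← Finset.mul_sum, Finset.sum_const, Finset.card_univ,
          nsmul_eq_mul]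
        ring
    _ ≤ 2 * σ * (v ⬝ᵥ v + c * c) := by
        nlinarith [hσ v, mul_le_mul_of_nonneg_right hγ (sq_nonneg c)]

/-- Appending one coordinate, with the same value for all vectors, turns the cardinality of `F` into
a diagonal entry of the matrix that is being balanced. -/
theorem exists_finset_card_le_and_neg_le_and_le (hρ : 0 < ρ) (hρσ : ρ ≤ σ)
    (hσρ : σ ≤ ρ * Fintype.card κ) (hb : ∀ k, b k ⬝ᵥ b k ≤ ρ)
    (hσ : ∑ k, vecMulVec (b k) (b k) ≤ σ • (1 : Matrix ι ι ℝ)) (hs₀ : 0 < s) (hs₁ : s ≤ 1) :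
    ∃ F : Finset κ, (F.card : ℝ) ≤ (s + 8 * √(s * ρ * σ) / σ) * Fintype.card κ ∧
      -((8 * √(s * ρ * σ)) • (1 : Matrix ι ι ℝ)) ≤
        ∑ k ∈ F, vecMulVec (b k) (b k) - s • ∑ k, vecMulVec (b k) (b k) ∧
      ∑ k ∈ F, vecMulVec (b k) (b k) - s • ∑ k, vecMulVec (b k) (b k) ≤
        (8 * √(s * ρ * σ)) • (1 : Matrix ι ι ℝ) := by
  have hσ₀ : 0 < σ := hρ.trans_le hρσ
  have hκ : (0 : ℝ) < Fintype.card κ := pos_of_mul_pos_right (hσ₀.trans_le hσρ) hρ.le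
  set γ := √(σ / Fintype.card κ)
  have hγ : γ ^ 2 = σ / Fintype.card κ := Real.sq_sqrt (by positivity)
  have hnorm : ∀ k, appendCoord γ (b k) ⬝ᵥ appendCoord γ (b k) ≤ 2 * ρ := by
    intro k
    have : γ ^ 2 ≤ ρ := by rwa [hγ, div_le_iff₀ hκ]
    rw [appendCoord_dotProduct_appendCoord, two_mul, ← sq]
    exact add_le_add (hb k) this
  have hsum := (sum_vecMulVec_appendCoord_le hσ (by rw [hγ, div_mul_cancel₀ _ hκ.ne'])).trans
    (smul_le_smul_of_nonneg_right (by linarith : 2 * σ ≤ 4 * σ) zero_le_one)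
  obtain ⟨F, hlower, hupper⟩ := exists_finset_neg_smul_one_le_and_le_smul_one (by positivity)
    (by linarith) hnorm hsum hs₀ hs₁
  have hx : 2 * √(2 * s * (2 * ρ) * (4 * σ)) = 8 * √(s * ρ * σ) := by
    rw [show 2 * s * (2 * ρ) * (4 * σ) = 4 ^ 2 * (s * ρ * σ) by ring,
      Real.sqrt_mul (by positivity), Real.sqrt_sq (by positivity)]
    ring
  rw [hx] at hlower hupper
  refine ⟨F, ?_, ?_, ?_⟩
  · have hcard := card_mul_sq_le_of_sum_appendCoord_sub_le hupper
    refine le_of_mul_le_mul_right (hcard.trans_eq ?_) (hγ ▸ div_pos hσ₀ hκ)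
    rw [hγ]
    field_simp
    ring
  · simpa only [submatrix_neg, submatrix_sub, submatrix_smul, Pi.neg_apply, Pi.sub_apply,
      Pi.smul_apply, sum_vecMulVec_appendCoord_submatrix_inl,
      submatrix_one _ Sum.inl_injective] using submatrix_le_submatrix hlower Sum.inl
  · simpa only [submatrix_sub, submatrix_smul, Pi.sub_apply, Pi.smul_apply,
      sum_vecMulVec_appendCoord_submatrix_inl, submatrix_one _ Sum.inl_injective] using
      submatrix_le_submatrix hupper Sum.inl

end LoewnerOrder

/-! ### Graphs -/

section Graphs

variable {V κ : Type*} [Fintype V] [DecidableEq V] {E : κ → V × V}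

/-- The vector `χ_u - χ_v` of the edge with endpoints `(u, v)`. -/
def incidenceVec (E : κ → V × V) (e : κ) : V → ℝ :=
  Pi.single (E e).1 1 - Pi.single (E e).2 1

lemma incidenceVec_dotProduct (e : κ) (v : V → ℝ) :
    incidenceVec E e ⬝ᵥ v = v (E e).1 - v (E e).2 := by
  rw [incidenceVec, sub_dotProduct, single_one_dotProduct, single_one_dotProduct]

lemma incidenceVec_dotProduct_self (hE : ∀ e, (E e).1 ≠ (E e).2) (e : κ) :
    incidenceVec E e ⬝ᵥ incidenceVec E e = 2 := by
  rw [incidenceVec_dotProduct, incidenceVec, Pi.sub_apply, Pi.sub_apply, Pi.single_eq_same,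
    Pi.single_eq_same, Pi.single_eq_of_ne (hE e), Pi.single_eq_of_ne (hE e).symm]
  norm_num

variable [Fintype κ]

/-- The maximum degree of the multigraph with edge list `E`. -/
def maxDegree (E : κ → V × V) : ℕ :=
  Finset.univ.sup fun v => (Finset.univ.filter fun e => (E e).1 = v ∨ (E e).2 = v).card

lemma card_filter_le_maxDegree (E : κ → V × V) (v : V) :
    (Finset.univ.filter fun e => (E e).1 = v ∨ (E e).2 = v).card ≤ maxDegree E :=
  Finset.le_sup (f := fun v => (Finset.univ.filter fun e => (E e).1 = v ∨ (E e).2 = v).card)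
    (Finset.mem_univ v)

lemma maxDegree_pos [Nonempty κ] (E : κ → V × V) : 0 < maxDegree E := by
  obtain ⟨e⟩ := ‹Nonempty κ›
  exact (Finset.card_pos.2 ⟨e, by simp⟩).trans_le (card_filter_le_maxDegree E (E e).1)

lemma maxDegree_le_card (E : κ → V × V) : maxDegree E ≤ Fintype.card κ :=
  Finset.sup_le fun _ _ => Finset.card_le_univ _

lemma sum_endpoints_le (hE : ∀ e, (E e).1 ≠ (E e).2) {g : V → ℝ} (hg : ∀ v, 0 ≤ g v) :
    ∑ e, (g (E e).1 + g (E e).2) ≤ maxDegree E * ∑ v, g v := by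
  have hsplit : ∀ e, g (E e).1 + g (E e).2 =
      ∑ v, if (E e).1 = v ∨ (E e).2 = v then g v else 0 := by
    intro e
    rw [← Finset.sum_filter, ← Finset.sum_pair (hE e)]
    congr 1
    ext v
    simp [eq_comm]
  simp_rw [hsplit]
  rw [Finset.sum_comm, Finset.mul_sum]
  refine Finset.sum_le_sum fun v _ => ?_
  rw [← Finset.sum_filter, Finset.sum_const, nsmul_eq_mul]
  exact mul_le_mul_of_nonneg_right (by exact_mod_cast card_filter_le_maxDegree E v) (hg v)

lemma two_mul_card_le (hE : ∀ e, (E e).1 ≠ (E e).2) :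
    (2 * Fintype.card κ : ℝ) ≤ Fintype.card V * maxDegree E := by
  have := sum_endpoints_le hE (g := 1) fun _ => zero_le_one
  simp only [Pi.one_apply, Finset.sum_const, Finset.card_univ, nsmul_eq_mul, mul_one] at this
  linarith

lemma sum_vecMulVec_incidenceVec_le (hE : ∀ e, (E e).1 ≠ (E e).2) :
    ∑ e, vecMulVec (incidenceVec E e) (incidenceVec E e) ≤
      (2 * maxDegree E : ℝ) • (1 : Matrix V V ℝ) := by
  refine sum_vecMulVec_le_smul_one_iff.2 fun v => ?_
  calc ∑ e, (incidenceVec E e ⬝ᵥ v) ^ 2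
      ≤ 2 * ∑ e, (v (E e).1 ^ 2 + v (E e).2 ^ 2) := by
        rw [Finset.mul_sum]
        refine Finset.sum_le_sum fun e _ => ?_
        rw [incidenceVec_dotProduct]
        linarith [sq_nonneg (v (E e).1 + v (E e).2)]
    _ ≤ 2 * (maxDegree E * ∑ w, v w ^ 2) :=
        mul_le_mul_of_nonneg_left (sum_endpoints_le hE fun w => sq_nonneg (v w)) zero_le_two
    _ = 2 * maxDegree E * (v ⬝ᵥ v) := by simp only [dotProduct, sq, mul_assoc]

lemma exists_finset_of_samplingRate [Nonempty κ] (hE : ∀ e, (E e).1 ≠ (E e).2) {s : ℝ}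
    (hs₀ : 0 < s) (hs₁ : s ≤ 1) :
    ∃ F : Finset κ,
      (F.card : ℝ) ≤ (s + 8 * √(s * maxDegree E) / maxDegree E) * Fintype.card κ ∧
      -((16 * √(s * maxDegree E)) • (1 : Matrix V V ℝ)) ≤
        ∑ e ∈ F, vecMulVec (incidenceVec E e) (incidenceVec E e) -
          s • ∑ e, vecMulVec (incidenceVec E e) (incidenceVec E e) ∧
      ∑ e ∈ F, vecMulVec (incidenceVec E e) (incidenceVec E e) -
          s • ∑ e, vecMulVec (incidenceVec E e) (incidenceVec E e) ≤
        (16 * √(s * maxDegree E)) • (1 : Matrix V V ℝ) := by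
  have hd₁ : (1 : ℝ) ≤ maxDegree E := by exact_mod_cast maxDegree_pos E
  have hdκ : (maxDegree E : ℝ) ≤ Fintype.card κ := by exact_mod_cast maxDegree_le_card E
  have hx : 8 * √(s * 2 * (2 * maxDegree E)) = 16 * √(s * maxDegree E) := by
    rw [show s * 2 * (2 * maxDegree E) = 2 ^ 2 * (s * maxDegree E) by ring,
      Real.sqrt_mul (by positivity), Real.sqrt_sq zero_le_two]
    ring
  obtain ⟨F, hcard, hlower, hupper⟩ := exists_finset_card_le_and_neg_le_and_le zero_lt_two
    (by linarith : (2 : ℝ) ≤ 2 * maxDegree E) (by linarith)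
    (fun e => (incidenceVec_dotProduct_self hE e).le) (sum_vecMulVec_incidenceVec_le hE) hs₀ hs₁
  rw [hx] at hcard hlower hupper
  exact ⟨F, hcard.trans_eq (by ring), hlower, hupper⟩

lemma samplingRate_bounds {n m d ε s : ℝ} (hm : 0 < m) (hd : 0 < d) (hε₀ : 0 < ε) (hε₁ : ε ≤ 1)
    (hs₀ : 0 < s) (hs : s = n / ε ^ 2 / m) (hmd : 2 * m ≤ n * d) :
    16 * √(s * d) ≤ s * (8 * √2 * ε * d) ∧ s + 8 * √(s * d) / d ≤ 8 * s := by
  have hq₀ : 0 < √(s * d) := Real.sqrt_pos.2 (by positivity)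
  have hq_sq : √(s * d) ^ 2 = s * d := Real.sq_sqrt (by positivity)
  have hεq : √2 ≤ ε * √(s * d) := by
    have e : s * d = n * d / m / ε ^ 2 := by rw [hs]; ring
    rw [e, Real.sqrt_div' _ (sq_nonneg ε), Real.sqrt_sq hε₀.le, mul_div_cancel₀ _ hε₀.ne']
    exact Real.sqrt_le_sqrt ((le_div_iff₀ hm).2 hmd)
  constructor
  · calc 16 * √(s * d) = 8 * √2 * √(s * d) * √2 := by
          linear_combination -8 * √(s * d) * Real.mul_self_sqrt zero_le_two
      _ ≤ 8 * √2 * √(s * d) * (ε * √(s * d)) := by gcongr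
      _ = s * (8 * √2 * ε * d) := by linear_combination 8 * √2 * ε * hq_sq
  · have hq : 8 / 7 ≤ √(s * d) := by
      have : 8 / 7 ≤ √2 := Real.le_sqrt_of_sq_le (by norm_num)
      nlinarith
    have : 8 * √(s * d) / d ≤ 7 * s := (div_le_iff₀ hd).2 (by nlinarith)
    linarith

theorem additive_unweighted_sparsifier_exists_general (E : κ → V × V)
    (hE : ∀ e, (E e).1 ≠ (E e).2) {ε : ℝ} (hε₀ : 0 < ε) (hε₁ : ε ≤ 1)
    (hm : (Fintype.card V : ℝ) / ε ^ 2 ≤ Fintype.card κ) :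
    ∃ F : Finset κ, (F.card : ℝ) ≤ 8 * Fintype.card V / ε ^ 2 ∧
      -((8 * √2 * ε * maxDegree E) • (1 : Matrix V V ℝ)) ≤
        ∑ e, vecMulVec (incidenceVec E e) (incidenceVec E e) -
          (Fintype.card κ / (Fintype.card V / ε ^ 2) : ℝ) •
            ∑ e ∈ F, vecMulVec (incidenceVec E e) (incidenceVec E e) ∧
      ∑ e, vecMulVec (incidenceVec E e) (incidenceVec E e) -
          (Fintype.card κ / (Fintype.card V / ε ^ 2) : ℝ) •
            ∑ e ∈ F, vecMulVec (incidenceVec E e) (incidenceVec E e) ≤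
        (8 * √2 * ε * maxDegree E) • (1 : Matrix V V ℝ) := by
  rcases isEmpty_or_nonempty V with hV | hV
  · exact ⟨∅, by simp, (Subsingleton.elim _ _).le, (Subsingleton.elim _ _).le⟩
  have hM : 0 < (Fintype.card V : ℝ) / ε ^ 2 := by positivity
  have hκ : (0 : ℝ) < Fintype.card κ := hM.trans_le hm
  have : Nonempty κ := Fintype.card_pos_iff.1 (by exact_mod_cast hκ)
  have hd : (0 : ℝ) < maxDegree E := by exact_mod_cast maxDegree_pos E
  obtain ⟨s, hs⟩ : ∃ s, s = (Fintype.card V : ℝ) / ε ^ 2 / Fintype.card κ := ⟨_, rfl⟩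
  have hs₀ : 0 < s := by rw [hs]; positivity
  have hsκ : s * Fintype.card κ = Fintype.card V / ε ^ 2 := by rw [hs, div_mul_cancel₀ _ hκ.ne']
  obtain ⟨hbound, hrate⟩ := samplingRate_bounds hκ hd hε₀ hε₁ hs₀ hs (two_mul_card_le hE)
  obtain ⟨F, hcard, hlower, hupper⟩ :=
    exists_finset_of_samplingRate hE hs₀ (hs ▸ (div_le_one hκ).2 hm)
  have hbound_one := smul_le_smul_of_nonneg_right hbound (zero_le_one (α := Matrix V V ℝ))
  rw [← inv_div (Fintype.card V / ε ^ 2 : ℝ) (Fintype.card κ : ℝ), ← hs]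
  refine ⟨F, ?_, ?_, ?_⟩
  · calc (F.card : ℝ) ≤ 8 * s * Fintype.card κ := hcard.trans (by gcongr)
      _ = 8 * Fintype.card V / ε ^ 2 := by rw [mul_assoc, hsκ, mul_div_assoc]
  · rw [neg_le_sub_iff_le_add, inv_smul_le_iff_of_pos hs₀, smul_add, smul_smul,
      ← sub_le_iff_le_add']
    exact hupper.trans hbound_one
  · rw [sub_le_comm, le_inv_smul_iff_of_pos hs₀, smul_sub, smul_smul, sub_eq_add_neg,
      ← le_sub_iff_add_le']
    exact (neg_le_neg hbound_one).trans hlower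

end Graphs

/-- **Existence of a linear-sized additive unweighted spectral sparsifier.**
Let `G` be a simple graph on `n` vertices with `m` edges (given by an edge list
`E : Fin m → V × V` with distinct endpoints and pairwise distinct unordered pairs),
with maximum degree `d`. For `ε ∈ (0, 1]` with `m ≥ n/ε²`, setting `m̃ := n/ε²`, there
is a subset `F` of the edges with `|F| ≤ 8n/ε²` such that
`-8√2 ε d Iₙ ⪯ L_G - (m/m̃) ∑_{e ∈ F} b_e b_eᵀ ⪯ 8√2 ε d Iₙ`. -/
theorem additive_unweighted_sparsifier_exists {n m : ℕ} (E : Fin m → Fin n × Fin n)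
    (hE1 : ∀ e, (E e).1 ≠ (E e).2)
    (hE2 : ∀ e e', ({(E e).1, (E e).2} : Finset (Fin n)) = {(E e').1, (E e').2} → e = e')
    (b : Fin m → Fin n → ℝ)
    (hb : b = fun e w => (if w = (E e).1 then (1 : ℝ) else 0) - (if w = (E e).2 then 1 else 0))
    (d : ℕ)
    (hd : d = Finset.univ.sup fun v : Fin n =>
      (Finset.univ.filter fun e => (E e).1 = v ∨ (E e).2 = v).card)
    (ε : ℝ) (hε0 : 0 < ε) (hε1 : ε ≤ 1)
    (hm : (n : ℝ) / ε^2 ≤ m) :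
    ∃ F : Finset (Fin m), (F.card : ℝ) ≤ 8 * n / ε^2 ∧
      (((∑ e, vecMulVec (b e) (b e)) -
          ((m : ℝ) / ((n : ℝ) / ε^2)) • ∑ e ∈ F, vecMulVec (b e) (b e)) +
        (8 * Real.sqrt 2 * ε * d) • (1 : Matrix (Fin n) (Fin n) ℝ)).PosSemidef ∧
      ((8 * Real.sqrt 2 * ε * d) • (1 : Matrix (Fin n) (Fin n) ℝ) -
        ((∑ e, vecMulVec (b e) (b e)) -
          ((m : ℝ) / ((n : ℝ) / ε^2)) • ∑ e ∈ F, vecMulVec (b e) (b e))).PosSemidef := by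
  subst hd
  have hb' : b = incidenceVec E := by
    ext e w
    simp only [hb, incidenceVec, Pi.sub_apply, Pi.single_apply]
  obtain ⟨F, hcard, hlower, hupper⟩ :=
    additive_unweighted_sparsifier_exists_general E hE1 hε0 hε1 (by simpa using hm)
  simp only [Fintype.card_fin, ← hb'] at hcard hlower hupper
  refine ⟨F, hcard, ?_, hupper⟩
  rwa [← nonneg_iff_posSemidef, ← neg_le_iff_add_nonneg]
end
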